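/- arXiv:2211.00507 — 4 statements merged into one kernel-verified Lean document; each statement's English description precedes it below -/
import Mathlib

section
/- Let C be a pointed coalgebra over an algebraically closed field whose Ext-quiver contains a subquiver Q′ such that there exists a quotient-quiver homomorphism q : Q → Q′ from some finite bipartite quiver Q whose underlying graph is not a disjoint union of Dynkin diagrams. Then C is not of discrete corepresentation type. -/
open TensorProduct



section Basic

variable (K : Type) [CommRing K] (H : Type) [AddCommGroup H] [Module K H] [Coalgebra K H]

/-- A grouplike element of a coalgebra. -/
def IsGrouplike (g : H) : Prop :=
  Coalgebra.counit (R := K) g = 1 ∧ Coalgebra.comul (R := K) g = g ⊗ₜ[K] g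

/-- The space `P(g,h)` of `(g,h)`-skew primitive elements. -/
noncomputable def skewPrim (g h : H) : Submodule K H :=
  LinearMap.ker (Coalgebra.comul (R := K) (A := H)
    - (TensorProduct.mk K H H g + (TensorProduct.mk K H H).flip h))

lemma mem_skewPrim {g h x : H} :
    x ∈ skewPrim K H g h ↔ Coalgebra.comul (R := K) x = g ⊗ₜ[K] x + x ⊗ₜ[K] h := by
  rw [skewPrim, LinearMap.mem_ker, LinearMap.sub_apply, sub_eq_zero, LinearMap.add_apply]
  rfl

/-- A submodule which is a subcoalgebra. -/
def IsSubcoalgebra (D : Submodule K H) : Prop :=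
  ∀ x ∈ D, Coalgebra.comul (R := K) x ∈ LinearMap.range (TensorProduct.map D.subtype D.subtype)

/-- A coalgebra is pointed if every simple subcoalgebra is one-dimensional. -/
def IsPointedCoalgebra : Prop :=
  ∀ D : Submodule K H, IsSubcoalgebra K H D → D ≠ ⊥ →
    (∀ D' : Submodule K H, IsSubcoalgebra K H D' → D' ≤ D → D' = ⊥ ∨ D' = D) →
    Module.finrank K ↥D = 1

end Basic

section Comodules

variable (K : Type) [CommRing K] (H : Type) [AddCommGroup H] [Module K H] [Coalgebra K H]

/-- A (finite or infinite dimensional) right `H`-comodule. -/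
structure Comod where
  carrier : Type
  [acg : AddCommGroup carrier]
  [mod : Module K carrier]
  ρ : carrier →ₗ[K] carrier ⊗[K] H
  counit_comp : ∀ m : carrier,
    (TensorProduct.rid K carrier)
      ((LinearMap.lTensor carrier (Coalgebra.counit (R := K) (A := H))) (ρ m)) = m
  coassoc : ∀ m : carrier,
    (LinearMap.lTensor carrier (Coalgebra.comul (R := K) (A := H))) (ρ m)
      = (TensorProduct.assoc K carrier H H) ((LinearMap.rTensor H ρ) (ρ m))

attribute [instance] Comod.acg Comod.mod

/-- A morphism of right `H`-comodules. -/
structure ComodHom (M N : Comod K H) where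
  toLin : M.carrier →ₗ[K] N.carrier
  compat : ∀ m : M.carrier, N.ρ (toLin m) = (LinearMap.rTensor H toLin) (M.ρ m)

/-- Isomorphism of comodules. -/
def ComodIso (M N : Comod K H) : Prop :=
  ∃ f : ComodHom K H M N, Function.Bijective f.toLin

/-- An indecomposable comodule: it is nonzero, and (equivalently to the usual definition,
since idempotents split in comodule categories) every idempotent endomorphism is `0` or `1`. -/
def Comod.Indec (M : Comod K H) : Prop :=
  (∃ m : M.carrier, m ≠ 0) ∧
    ∀ f : ComodHom K H M M, f.toLin ∘ₗ f.toLin = f.toLin →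
      f.toLin = 0 ∨ f.toLin = LinearMap.id

/-- A submodule of a comodule which is a subcomodule. -/
def IsSubcomod (M : Comod K H) (N : Submodule K M.carrier) : Prop :=
  ∀ m ∈ N, M.ρ m ∈ LinearMap.range (LinearMap.rTensor H N.subtype)

/-- The coaction of `M` factors through the subcoalgebra `D`, i.e. `M` is a `D`-comodule. -/
def CoactsThrough (M : Comod K H) (D : Submodule K H) : Prop :=
  ∀ m : M.carrier, M.ρ m ∈ LinearMap.range (LinearMap.lTensor M.carrier D.subtype)

/-- `M` has dimension vector `d` : it admits a composition series whose successive quotients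
are the one-dimensional comodules associated to grouplike elements, where for every `h` the
grouplike `h` occurs exactly `d h` times. -/
def HasDimVector (M : Comod K H) (d : H → ℕ) : Prop :=
  ∃ (k : ℕ) (F : Fin (k+1) → Submodule K M.carrier) (g : Fin k → H),
    F 0 = ⊥ ∧ F (Fin.last k) = ⊤ ∧
    (∀ i : Fin k, F i.castSucc ≤ F i.succ) ∧
    (∀ i : Fin (k+1), IsSubcomod K H M (F i)) ∧
    (∀ i : Fin k, IsGrouplike K H (g i)) ∧
    (∀ i : Fin k, ∃ m : M.carrier, m ∈ F i.succ ∧ m ∉ F i.castSucc ∧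
        F i.succ = F i.castSucc ⊔ Submodule.span K {m}) ∧
    (∀ i : Fin k, ∀ m ∈ F i.succ,
        M.ρ m - m ⊗ₜ[K] (g i) ∈ LinearMap.range (LinearMap.rTensor H (F i.castSucc).subtype)) ∧
    (∀ h : H, d h = Nat.card {i : Fin k // g i = h})

/-- A pointed coalgebra is of discrete corepresentation type if for every dimension vector `d`
there are only finitely many isomorphism classes of indecomposable comodules with
dimension vector `d`. -/
def DiscreteCorepType : Prop :=
  ∀ d : H → ℕ, ∃ (N : ℕ) (R : Fin N → Comod K H),
    ∀ M : Comod K H, M.Indec K H → HasDimVector K H M d → ∃ i, ComodIso K H M (R i)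

/-- A subcoalgebra `D ≤ H` is of finite corepresentation type: there are only finitely many
isomorphism classes of finite-dimensional indecomposable comodules whose coaction factors
through `D`. -/
def FinCorepTypeOn (D : Submodule K H) : Prop :=
  ∃ (N : ℕ) (R : Fin N → Comod K H),
    ∀ M : Comod K H, M.Indec K H → Module.Finite K M.carrier → CoactsThrough K H M D →
      ∃ i, ComodIso K H M (R i)

/-- A coalgebra is of finite corepresentation type. -/
def FinCorepType : Prop := FinCorepTypeOn K H ⊤

end Comodules

theorem algdep {K : Type} [Field K] {α β : Type} [Fintype α] [Fintype β]
    (h : Fintype.card β < Fintype.card α) (z : α → MvPolynomial β K) :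
    ∃ p : MvPolynomial α K, p ≠ 0 ∧ MvPolynomial.aeval z p = 0 := by
  by_contra hc
  push Not at hc
  have hi : AlgebraicIndependent K z := by
    rw [algebraicIndependent_iff]
    intro p hp
    by_contra h0
    exact hc p h0 hp
  have h1 := hi.cardinalMk_le_trdeg
  rw [MvPolynomial.trdeg_of_isDomain] at h1
  simp at h1
  omega

set_option linter.unusedSectionVars false

namespace QR

open Matrix Classical

section

variable {K : Type} [Field K] {V A ι : Type} [Fintype ι]

/-- support condition for representations -/
def Supp (c : ι → V) (s t : A → V) (φ : A → Matrix ι ι K) : Prop :=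
  ∀ e i j, φ e i j ≠ 0 → c i = s e ∧ c j = t e

/-- graded matrices -/
def Gr (c : ι → V) (P : Matrix ι ι K) : Prop := ∀ i j, P i j ≠ 0 → c i = c j

/-- diagonal part -/
noncomputable def dg (c : ι → V) (P : Matrix ι ι K) : Matrix ι ι K :=
  fun i j => if c i = c j then P i j else 0

/-- isomorphism of representations -/
def RIso (c : ι → V) (φ ψ : A → Matrix ι ι K) : Prop :=
  ∃ P Q : Matrix ι ι K, Gr c P ∧ Gr c Q ∧ Q * P = 1 ∧ P * Q = 1 ∧ ∀ e, P * φ e = ψ e * P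

theorem gr_dg (c : ι → V) (P : Matrix ι ι K) : Gr c (dg c P) := by
  intro i j h
  by_contra h'
  simp [dg, h'] at h

theorem dg_of_gr {c : ι → V} {P : Matrix ι ι K} (h : Gr c P) : dg c P = P := by
  ext i j
  unfold dg
  split_ifs with h'
  · rfl
  · by_contra h2
    exact h' (h i j (Ne.symm h2))

theorem gr_one (c : ι → V) : Gr c (1 : Matrix ι ι K) := by
  intro i j h
  by_contra h'
  have : i ≠ j := fun h => h' (by rw [h])
  simp [this] at h

theorem gr_mul {c : ι → V} {P Q : Matrix ι ι K} (hP : Gr c P) (hQ : Gr c Q) : Gr c (P * Q) := by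
  intro i j h
  rw [Matrix.mul_apply] at h
  obtain ⟨k, _, hk⟩ := Finset.exists_ne_zero_of_sum_ne_zero h
  rw [hP i k (left_ne_zero_of_mul hk), hQ k j (right_ne_zero_of_mul hk)]

theorem dg_mul {c : ι → V} {f h : Matrix ι ι K}
    (H : ∀ v, (∀ i j, c i = v → c j ≠ v → h i j = 0) ∨ (∀ i j, c j = v → c i ≠ v → f i j = 0)) :
    dg c (h * f) = dg c h * dg c f := by
  ext i j
  rw [Matrix.mul_apply]
  by_cases hij : c i = c j
  · simp only [dg, hij, if_true, Matrix.mul_apply]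
    apply Finset.sum_congr rfl
    intro k _
    by_cases hk : c k = c j
    · simp [hk]
    · rw [if_neg (Ne.symm hk), if_neg hk]
      rcases H (c j) with H | H
      · rw [H i k hij hk]; simp
      · rw [H k j rfl hk]; simp
  · simp only [dg, hij, if_false]
    symm
    apply Finset.sum_eq_zero
    intro k _
    by_cases hk : c i = c k
    · rw [if_neg (fun h => hij (hk.trans h)), mul_zero]
    · rw [if_neg hk, zero_mul]

theorem gr_inv {c : ι → V} {P Q : Matrix ι ι K} (hP : Gr c P) (h : Q * P = 1) : Gr c Q := by
  have h1 : dg c (Q * P) = dg c Q * dg c P := by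
    apply dg_mul
    intro v
    right
    intro i j hj hi
    by_contra h0
    exact hi ((hP i j h0).trans hj)
  rw [h, dg_of_gr (gr_one c), dg_of_gr hP] at h1
  have h2 : P * Q = 1 := mul_eq_one_comm.mp h
  have : dg c Q = Q := by
    calc dg c Q = dg c Q * (P * Q) := by rw [h2, mul_one]
      _ = Q := by rw [← mul_assoc, ← h1, one_mul]
  rw [← this]
  exact gr_dg c Q

theorem RIso.symm {c : ι → V} {φ ψ : A → Matrix ι ι K} (h : RIso c φ ψ) : RIso c ψ φ := by
  obtain ⟨P, Q, hP, hQ, h1, h2, h3⟩ := h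
  refine ⟨Q, P, hQ, hP, h2, h1, fun e => ?_⟩
  calc Q * ψ e = Q * (ψ e * P) * Q := by simp only [mul_assoc, h2, mul_one]
    _ = φ e * Q := by rw [← h3, ← mul_assoc, h1, one_mul]

theorem RIso.trans {c : ι → V} {φ ψ χ : A → Matrix ι ι K} (h : RIso c φ ψ) (h' : RIso c ψ χ) :
    RIso c φ χ := by
  obtain ⟨P, Q, hP, hQ, h1, h2, h3⟩ := h
  obtain ⟨P', Q', hP', hQ', h1', h2', h3'⟩ := h'
  refine ⟨P' * P, Q * Q', gr_mul hP' hP, gr_mul hQ hQ', ?_, ?_, fun e => ?_⟩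
  · calc Q * Q' * (P' * P) = Q * (Q' * P') * P := by simp only [mul_assoc]
      _ = 1 := by rw [h1', mul_one, h1]
  · calc P' * P * (Q * Q') = P' * (P * Q) * Q' := by simp only [mul_assoc]
      _ = 1 := by rw [h2, mul_one, h2']
  · rw [mul_assoc, h3, ← mul_assoc, h3', mul_assoc]

theorem supp_conj {c : ι → V} {s t : A → V} {φ : A → Matrix ι ι K} (h : Supp c s t φ)
    {P Q : Matrix ι ι K} (hP : Gr c P) (hQ : Gr c Q) : Supp c s t (fun e => Q * φ e * P) := by
  intro e i j hij
  simp only [Matrix.mul_apply] at hij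
  obtain ⟨k, _, hk⟩ := Finset.exists_ne_zero_of_sum_ne_zero hij
  obtain ⟨l, _, hl⟩ := Finset.exists_ne_zero_of_sum_ne_zero (left_ne_zero_of_mul hk)
  obtain ⟨h1, h2⟩ := h e l k (right_ne_zero_of_mul hl)
  exact ⟨(hQ i l (left_ne_zero_of_mul hl)).trans h1, (hP k j (right_ne_zero_of_mul hk)).symm.trans h2⟩

theorem dg_comm {c : ι → V} {s t : A → V} {φ ψ : A → Matrix ι ι K} (hφ : Supp c s t φ)
    (hψ : Supp c s t ψ) {f : Matrix ι ι K} (hf : ∀ e, f * φ e = ψ e * f) (e : A) :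
    dg c f * φ e = ψ e * dg c f := by
  have z1 : ∀ i j, c i ≠ s e → ψ e i j = 0 := fun i j h => by
    by_contra h0; exact h (hψ e i j h0).1
  have z2 : ∀ i j, c j ≠ t e → ψ e i j = 0 := fun i j h => by
    by_contra h0; exact h (hψ e i j h0).2
  have z3 : ∀ i j, c i ≠ s e → φ e i j = 0 := fun i j h => by
    by_contra h0; exact h (hφ e i j h0).1
  have z4 : ∀ i j, c j ≠ t e → φ e i j = 0 := fun i j h => by
    by_contra h0; exact h (hφ e i j h0).2
  ext i j
  by_cases hi : c i = s e
  · by_cases hj : c j = t e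
    · have h1 : (dg c f * φ e) i j = (f * φ e) i j := by
        simp only [Matrix.mul_apply, dg]
        apply Finset.sum_congr rfl
        intro k _
        by_cases hk : c k = s e
        · rw [if_pos (hi.trans hk.symm)]
        · rw [z3 k j hk]; simp
      have h2 : (ψ e * dg c f) i j = (ψ e * f) i j := by
        simp only [Matrix.mul_apply, dg]
        apply Finset.sum_congr rfl
        intro k _
        by_cases hk : c k = t e
        · rw [if_pos (hk.trans hj.symm)]
        · rw [z2 i k hk]; simp
      rw [h1, h2, hf]
    · simp only [Matrix.mul_apply, dg]
      rw [Finset.sum_eq_zero, Finset.sum_eq_zero]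
      · intro k _
        by_cases hk : c k = c j
        · rw [z2 i k (fun h => hj (hk.symm.trans h)), zero_mul]
        · rw [if_neg hk, mul_zero]
      · intro k _
        rw [z4 k j hj, mul_zero]
  · simp only [Matrix.mul_apply, dg]
    rw [Finset.sum_eq_zero, Finset.sum_eq_zero]
    · intro k _
      rw [z1 i k hi, zero_mul]
    · intro k _
      by_cases hk : c i = c k
      · rw [z3 k j (fun h => hi (hk.trans h)), mul_zero]
      · rw [if_neg hk, zero_mul]

/-- nondegeneracy condition -/
def Good (c : ι → V) (φ : A → Matrix ι ι K) : Prop :=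
  ∀ v, (∀ u : ι → K, (∀ i, c i ≠ v → u i = 0) → (∀ e, φ e *ᵥ u = 0) → u = 0) ∨
    (∀ u : ι → K, (∀ i, c i ≠ v → u i = 0) → (∀ e, u ᵥ* φ e = 0) → u = 0)

/-- indecomposability -/
def RIndec (c : ι → V) (φ : A → Matrix ι ι K) : Prop :=
  ∀ f : Matrix ι ι K, Gr c f → f * f = f → (∀ e, f * φ e = φ e * f) → f = 0 ∨ f = 1

theorem good_pair {c : ι → V} {s t : A → V} {φ ψ : A → Matrix ι ι K} (hφ : Supp c s t φ)
    (hψ : Supp c s t ψ) (hG : Good c φ) {f h : Matrix ι ι K} (hf : ∀ e, f * φ e = ψ e * f)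
    (hh : ∀ e, h * ψ e = φ e * h) :
    ∀ v, (∀ i j, c i = v → c j ≠ v → h i j = 0) ∨ (∀ i j, c j = v → c i ≠ v → f i j = 0) := by
  intro v
  rcases hG v with H | H
  · left
    intro i j hi hj
    have := H (fun k => if c k = v then h k j else 0) (fun k hk => by simp [hk]) (fun e => by
      ext k
      simp only [Matrix.mulVec, dotProduct, Pi.zero_apply]
      by_cases hte : t e = v
      · have : ∑ l, φ e k l * h l j = 0 := by
          have h1 := congrFun (congrFun (hh e) k) j
          simp only [Matrix.mul_apply] at h1
          rw [← h1]
          apply Finset.sum_eq_zero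
          intro l _
          by_contra h0
          exact hj ((hψ e l j (right_ne_zero_of_mul h0)).2.trans hte)
        rw [← this]
        apply Finset.sum_congr rfl
        intro l _
        by_cases hl : c l = v
        · rw [if_pos hl]
        · have : φ e k l = 0 := by
            by_contra h0
            exact hl ((hφ e k l h0).2.trans hte)
          simp [this]
      · apply Finset.sum_eq_zero
        intro l _
        by_cases hl : c l = v
        · have : φ e k l = 0 := by
            by_contra h0
            exact hte ((hφ e k l h0).2.symm.trans hl)
          simp [this]
        · simp [hl])
    have h2 := congrFun this i
    simpa [hi] using h2
  · right
    intro i j hj hi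
    have := H (fun k => if c k = v then f i k else 0) (fun k hk => by simp [hk]) (fun e => by
      ext k
      simp only [Matrix.vecMul, dotProduct, Pi.zero_apply]
      by_cases hse : s e = v
      · have : ∑ l, f i l * φ e l k = 0 := by
          have h1 := congrFun (congrFun (hf e) i) k
          simp only [Matrix.mul_apply] at h1
          rw [h1]
          apply Finset.sum_eq_zero
          intro l _
          by_contra h0
          exact hi ((hψ e i l (left_ne_zero_of_mul h0)).1.trans hse)
        rw [← this]
        apply Finset.sum_congr rfl
        intro l _
        by_cases hl : c l = v
        · rw [if_pos hl]
        · have : φ e l k = 0 := by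
            by_contra h0
            exact hl ((hφ e l k h0).1.trans hse)
          simp [this]
      · apply Finset.sum_eq_zero
        intro l _
        by_cases hl : c l = v
        · have : φ e l k = 0 := by
            by_contra h0
            exact hse ((hφ e l k h0).1.symm.trans hl)
          simp [this]
        · simp [hl])
    have h2 := congrFun this j
    simpa [hj] using h2

/-- a full isomorphism gives a graded one -/
theorem riso_of_iso {c : ι → V} {s t : A → V} {φ ψ : A → Matrix ι ι K} (hφ : Supp c s t φ)
    (hψ : Supp c s t ψ) (hG : Good c φ) {f h : Matrix ι ι K} (hf : ∀ e, f * φ e = ψ e * f)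
    (hh : ∀ e, h * ψ e = φ e * h) (h1 : h * f = 1) : RIso c φ ψ := by
  have h2 := dg_mul (good_pair hφ hψ hG hf hh)
  rw [h1, dg_of_gr (gr_one c)] at h2
  exact ⟨dg c f, dg c h, gr_dg c f, gr_dg c h, h2.symm, mul_eq_one_comm.mp h2.symm,
    dg_comm hφ hψ hf⟩

theorem idem_zero {c : ι → V} {s t : A → V} {φ : A → Matrix ι ι K} (hφ : Supp c s t φ)
    (hG : Good c φ) {f : Matrix ι ι K} (hf : ∀ e, f * φ e = φ e * f) (hi : f * f = f)
    (h0 : dg c f = 0) : f = 0 := by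
  have hz : ∀ i j, c i = c j → f i j = 0 := by
    intro i j h
    have := congrFun (congrFun h0 i) j
    simpa [dg, h] using this
  rw [← hi]
  ext i j
  rw [Matrix.mul_apply, Matrix.zero_apply]
  apply Finset.sum_eq_zero
  intro k _
  rcases good_pair hφ hφ hG hf hf (c k) with H | H
  · by_cases hk : c j = c k
    · rw [hz k j hk.symm, mul_zero]
    · rw [H k j rfl hk, mul_zero]
  · by_cases hk : c i = c k
    · rw [hz i k hk, zero_mul]
    · rw [H i k rfl hk, zero_mul]

theorem full_indec {c : ι → V} {s t : A → V} {φ : A → Matrix ι ι K} (hφ : Supp c s t φ)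
    (hG : Good c φ) (hI : RIndec c φ) {f : Matrix ι ι K} (hf : ∀ e, f * φ e = φ e * f)
    (hi : f * f = f) : f = 0 ∨ f = 1 := by
  have h2 := dg_mul (good_pair hφ hφ hG hf hf)
  rw [hi] at h2
  rcases hI (dg c f) (gr_dg c f) h2.symm (dg_comm hφ hφ hf) with h | h
  · left; exact idem_zero hφ hG hf hi h
  · right
    have : 1 - f = 0 := by
      apply idem_zero hφ hG (f := 1 - f)
      · intro e; rw [sub_mul, mul_sub, hf, one_mul, mul_one]
      · simp [sub_mul, mul_sub, hi]
      · ext i j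
        have h3 := congrFun (congrFun h i) j
        have h4 := congrFun (congrFun (dg_of_gr (gr_one (K := K) c)) i) j
        simp only [dg, Matrix.sub_apply, Matrix.zero_apply] at h3 h4 ⊢
        split_ifs with hc
        · rw [if_pos hc] at h3; rw [h3, sub_self]
        · rfl
    exact (sub_eq_zero.mp this).symm

theorem good_of_indec {c : ι → V} {s t : A → V} {φ : A → Matrix ι ι K} (hφ : Supp c s t φ)
    (hbip : ∀ v : V, (∀ e, s e ≠ v) ∨ (∀ e, t e ≠ v)) (hI : RIndec c φ) (h0 : φ ≠ 0) :
    Good c φ := by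
  intro v
  rcases hbip v with hv | hv
  · left
    intro u hu hφu
    by_contra hne
    obtain ⟨i, hi⟩ := Function.ne_iff.mp hne
    simp only [Pi.zero_apply] at hi
    have hci : c i = v := by by_contra h; exact hi (hu i h)
    set π : Matrix ι ι K := vecMulVec u (Pi.single i (u i)⁻¹) with hπ
    have e1 : ∀ e, φ e * π = 0 := by
      intro e; rw [hπ, Matrix.mul_vecMulVec, hφu]; ext a b; simp [vecMulVec_apply]
    have e2 : ∀ e, π * φ e = 0 := by
      intro e
      rw [hπ, Matrix.vecMulVec_mul]
      have : Pi.single i (u i)⁻¹ ᵥ* φ e = 0 := by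
        ext b
        rw [Matrix.single_vecMul]
        have : φ e i b = 0 := by
          by_contra h; exact hv e ((hφ e i b h).1.symm.trans hci)
        simp [this]
      rw [this]; ext a b; simp [vecMulVec_apply]
    have e3 : π i i = 1 := by simp [hπ, vecMulVec_apply, hi]
    have e4 : π * π = π := by
      rw [hπ, Matrix.vecMulVec_mul_vecMulVec]; simp [hi]
    have e5 : Gr c π := by
      intro a b hab
      have h1 : a ∈ Set.univ := trivial
      rw [hπ, vecMulVec_apply] at hab
      have hb : b = i := by
        by_contra h; exact right_ne_zero_of_mul hab (by simp [h])
      have ha : c a = v := by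
        by_contra h; exact left_ne_zero_of_mul hab (hu a h)
      rw [ha, hb, hci]
    rcases hI π e5 e4 (fun e => by rw [e1, e2]) with h | h
    · rw [h] at e3; simp at e3
    · apply h0; funext e
      have := e1 e
      rw [h, mul_one] at this
      exact this
  · right
    intro u hu hφu
    by_contra hne
    obtain ⟨i, hi⟩ := Function.ne_iff.mp hne
    simp only [Pi.zero_apply] at hi
    have hci : c i = v := by by_contra h; exact hi (hu i h)
    set π : Matrix ι ι K := vecMulVec (Pi.single i (u i)⁻¹) u with hπ
    have e1 : ∀ e, π * φ e = 0 := by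
      intro e; rw [hπ, Matrix.vecMulVec_mul, hφu]; ext a b; simp [vecMulVec_apply]
    have e2 : ∀ e, φ e * π = 0 := by
      intro e
      rw [hπ, Matrix.mul_vecMulVec]
      have : φ e *ᵥ Pi.single i (u i)⁻¹ = 0 := by
        ext b
        have : φ e b i = 0 := by
          by_contra h; exact hv e ((hφ e b i h).2.symm.trans hci)
        simp [this]
      rw [this]; ext a b; simp [vecMulVec_apply]
    have e3 : π i i = 1 := by simp [hπ, vecMulVec_apply, hi]
    have e4 : π * π = π := by
      rw [hπ, Matrix.vecMulVec_mul_vecMulVec]; simp [hi]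
    have e5 : Gr c π := by
      intro a b hab
      rw [hπ, vecMulVec_apply] at hab
      have ha : a = i := by
        by_contra h; exact left_ne_zero_of_mul hab (by simp [h])
      have hb : c b = v := by
        by_contra h; exact right_ne_zero_of_mul hab (hu b h)
      rw [ha, hb, hci]
    rcases hI π e5 e4 (fun e => by rw [e1, e2]) with h | h
    · rw [h] at e3; simp at e3
    · apply h0; funext e
      have := e2 e
      rw [h, mul_one] at this
      exact this


/-- finitely many isomorphism classes in a set of representations -/
def FinOn (c : ι → V) (S : Set (A → Matrix ι ι K)) : Prop :=
  ∃ (L : Type) (_ : Finite L) (l : (A → Matrix ι ι K) → L),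
    ∀ φ ∈ S, ∀ ψ ∈ S, l φ = l ψ → RIso c φ ψ

theorem finOn_iUnion {c : ι → V} {I : Type} [Finite I] (T : I → Set (A → Matrix ι ι K))
    (h : ∀ i, FinOn c (T i)) (S : Set (A → Matrix ι ι K)) (hS : ∀ φ ∈ S, ∃ i, φ ∈ T i) :
    FinOn c S := by
  choose L hL l hl using h
  by_cases hI : Nonempty I
  · let ix : (A → Matrix ι ι K) → I := fun φ =>
      if h : ∃ i, φ ∈ T i then h.choose else Classical.choice hI
    have hix : ∀ φ ∈ S, φ ∈ T (ix φ) := by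
      intro φ hφ
      have := hS φ hφ
      simp only [ix, dif_pos this]
      exact this.choose_spec
    refine ⟨Σ i, L i, inferInstance, fun φ => ⟨ix φ, l (ix φ) φ⟩, ?_⟩
    intro φ hφ ψ hψ h
    have h1 := hix φ hφ
    have h2 := hix ψ hψ
    have h' : (⟨ix φ, l (ix φ) φ⟩ : Σ i, L i) = ⟨ix ψ, l (ix ψ) ψ⟩ := h
    clear h
    generalize ix φ = a at h1 h'
    generalize ix ψ = b at h2 h'
    obtain ⟨rfl, h⟩ := Sigma.mk.inj_iff.mp h'
    exact hl _ φ h1 ψ h2 (eq_of_heq h)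
  · refine ⟨Unit, inferInstance, fun _ => (), ?_⟩
    intro φ hφ
    obtain ⟨i, _⟩ := hS φ hφ
    exact absurd ⟨i⟩ hI

/-- block diagonal with respect to a subset -/
def Blk (J : Finset ι) (φ : A → Matrix ι ι K) : Prop :=
  ∀ e i j, φ e i j ≠ 0 → (i ∈ J ↔ j ∈ J)

theorem exists_split {c : ι → V} {s t : A → V} {φ : A → Matrix ι ι K} (hφ : Supp c s t φ)
    (hI : ¬ RIndec c φ) :
    ∃ (J : Finset ι) (φ' : A → Matrix ι ι K), J ≠ ∅ ∧ J ≠ Finset.univ ∧ Supp c s t φ' ∧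
      Blk J φ' ∧ RIso c φ φ' := by
  unfold RIndec at hI
  push Not at hI
  obtain ⟨f, hg, hff, hf, hf0, hf1⟩ := hI
  obtain ⟨w, hw⟩ : ∃ w : Matrix ι ι K, w = 1 - fᵀ := ⟨_, rfl⟩
  have hdet : ∑ J : Finset ι, Matrix.det (J.piecewise fᵀ w : Matrix ι ι K) = 1 := by
    have := (Matrix.detRowAlternating (n := ι) (R := K)).toMultilinearMap.map_add_univ fᵀ w
    have h2 : (fᵀ + w : Matrix ι ι K) = 1 := by rw [hw]; abel
    erw [h2] at this
    exact this.symm.trans Matrix.det_one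
  obtain ⟨J, _, hJ⟩ := Finset.exists_ne_zero_of_sum_ne_zero (hdet.trans_ne one_ne_zero)
  set P : Matrix ι ι K := (Matrix.of (J.piecewise fᵀ w) : Matrix ι ι K)ᵀ with hPdef
  have hPJ : ∀ i j, j ∈ J → P i j = f i j := by
    intro i j hj
    exact congrFun (Finset.piecewise_eq_of_mem J fᵀ w hj) i
  have hPJ' : ∀ i j, j ∉ J → P i j = (1 - f) i j := by
    intro i j hj
    refine (congrFun (Finset.piecewise_eq_of_notMem J fᵀ w hj) i).trans ?_
    rw [hw]; simp [Matrix.one_apply, eq_comm]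
  have hPu : IsUnit P.det := by
    rw [hPdef, Matrix.det_transpose]; exact isUnit_iff_ne_zero.mpr hJ
  set D : Matrix ι ι K := Matrix.diagonal (fun j => if j ∈ J then 1 else 0) with hD
  have hfP : f * P = P * D := by
    ext i j
    rw [hD, Matrix.mul_diagonal]
    by_cases hj : j ∈ J
    · rw [if_pos hj, mul_one, hPJ i j hj]
      have : (f * P) i j = (f * f) i j := by
        simp only [Matrix.mul_apply]
        exact Finset.sum_congr rfl (fun k _ => by rw [hPJ k j hj])
      rw [this, hff]
    · rw [if_neg hj, mul_zero]
      have : (f * P) i j = (f * (1 - f)) i j := by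
        simp only [Matrix.mul_apply]
        exact Finset.sum_congr rfl (fun k _ => by rw [hPJ' k j hj])
      rw [this, mul_sub, hff, mul_one, sub_self, Matrix.zero_apply]
  have hPg : Gr c P := by
    intro i j h
    by_cases hj : j ∈ J
    · rw [hPJ i j hj] at h; exact hg i j h
    · rw [hPJ' i j hj, Matrix.sub_apply] at h
      by_contra hc
      have h1 : f i j = 0 := by by_contra h0; exact hc (hg i j h0)
      have h2 : (1 : Matrix ι ι K) i j = 0 := by by_contra h0; exact hc (gr_one c i j h0)
      exact h (by rw [h1, h2, sub_zero])
  have hQP : P⁻¹ * P = 1 := Matrix.nonsing_inv_mul P hPu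
  have hPQ : P * P⁻¹ = 1 := Matrix.mul_nonsing_inv P hPu
  have hQg : Gr c P⁻¹ := gr_inv hPg hQP
  have hfD : f = P * D * P⁻¹ := by rw [← hfP, mul_assoc, hPQ, mul_one]
  have hQf : P⁻¹ * f = D * P⁻¹ := by
    rw [hfD, ← mul_assoc, ← mul_assoc, hQP, one_mul]
  refine ⟨J, fun e => P⁻¹ * φ e * P, ?_, ?_, supp_conj hφ hPg hQg, ?_, ?_⟩
  · rintro rfl
    apply hf0
    rw [hfD, hD]; simp
  · rintro rfl
    apply hf1
    rw [hfD, hD]; simp [hPQ]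
  · intro e i j hij
    have hc : D * (P⁻¹ * φ e * P) = (P⁻¹ * φ e * P) * D := by
      calc D * (P⁻¹ * φ e * P) = (D * P⁻¹) * φ e * P := by simp only [mul_assoc]
        _ = P⁻¹ * (f * φ e) * P := by rw [← hQf]; simp only [mul_assoc]
        _ = P⁻¹ * φ e * (f * P) := by rw [hf]; simp only [mul_assoc]
        _ = _ := by rw [hfP]; simp only [mul_assoc]
    have := congrFun (congrFun hc i) j
    rw [hD, Matrix.mul_diagonal, Matrix.diagonal_mul] at this
    by_cases hi : i ∈ J <;> by_cases hj : j ∈ J <;> simp [hi, hj] at this ⊢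
    · exact hij this
    · exact hij this.symm
  · refine ⟨P⁻¹, P, hQg, hPg, hPQ, hQP, fun e => ?_⟩
    simp only [mul_assoc, hPQ, mul_one]

/-- restriction to a subset -/
def res (p : ι → Prop) (φ : A → Matrix ι ι K) : A → Matrix {i // p i} {i // p i} K :=
  fun e => (φ e).submatrix Subtype.val Subtype.val

theorem supp_res {c : ι → V} {s t : A → V} {φ : A → Matrix ι ι K} (hφ : Supp c s t φ)
    (p : ι → Prop) : Supp (fun i : {i // p i} => c i) s t (res p φ) :=
  fun e i j h => hφ e i j h

theorem riso_blk {c : ι → V} {φ ψ : A → Matrix ι ι K} (J : Finset ι) (hφ : Blk J φ)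
    (hψ : Blk J ψ)
    (h1 : RIso (fun i : {i // i ∈ J} => c i) (res (· ∈ J) φ) (res (· ∈ J) ψ))
    (h2 : RIso (fun i : {i // ¬ i ∈ J} => c i) (res (fun i => ¬ i ∈ J) φ)
      (res (fun i => ¬ i ∈ J) ψ)) : RIso c φ ψ := by
  obtain ⟨P, Q, hP, hQ, a1, a2, a3⟩ := h1
  obtain ⟨P', Q', hP', hQ', b1, b2, b3⟩ := h2
  let E := (Equiv.sumCompl (fun i => i ∈ J)).symm
  have hE1 : ∀ i (h : i ∈ J), E i = Sum.inl ⟨i, h⟩ := fun i h =>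
    Equiv.sumCompl_symm_apply_of_pos h
  have hE2 : ∀ i (h : ¬ i ∈ J), E i = Sum.inr ⟨i, h⟩ := fun i h =>
    Equiv.sumCompl_symm_apply_of_neg h
  have hb : ∀ χ : A → Matrix ι ι K, Blk J χ → ∀ e,
      χ e = (Matrix.fromBlocks (res (· ∈ J) χ e) 0 0
        (res (fun i => ¬ i ∈ J) χ e)).submatrix E E := by
    intro χ hχ e
    ext i j
    by_cases hi : i ∈ J <;> by_cases hj : j ∈ J
    · simp [hE1 i hi, hE1 j hj, res]
    · simp only [Matrix.submatrix_apply, hE1 i hi, hE2 j hj, Matrix.fromBlocks_apply₁₂,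
        Matrix.zero_apply]
      by_contra h; exact hj ((hχ e i j h).1 hi)
    · simp only [Matrix.submatrix_apply, hE2 i hi, hE1 j hj, Matrix.fromBlocks_apply₂₁,
        Matrix.zero_apply]
      by_contra h; exact hi ((hχ e i j h).2 hj)
    · simp [hE2 i hi, hE2 j hj, res]
  have hgr : ∀ (R : Matrix {i // i ∈ J} {i // i ∈ J} K) (R' : Matrix {i // ¬ i ∈ J} {i // ¬ i ∈ J} K),
      Gr (fun i : {i // i ∈ J} => c i) R → Gr (fun i : {i // ¬ i ∈ J} => c i) R' →
      Gr c ((Matrix.fromBlocks R 0 0 R').submatrix E E) := by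
    intro R R' hR hR' i j h
    by_cases hi : i ∈ J <;> by_cases hj : j ∈ J
    · simp only [Matrix.submatrix_apply, hE1 i hi, hE1 j hj, Matrix.fromBlocks_apply₁₁] at h
      exact hR _ _ h
    · simp [hE1 i hi, hE2 j hj] at h
    · simp [hE2 i hi, hE1 j hj] at h
    · simp only [Matrix.submatrix_apply, hE2 i hi, hE2 j hj, Matrix.fromBlocks_apply₂₂] at h
      exact hR' _ _ h
  refine ⟨(Matrix.fromBlocks P 0 0 P').submatrix E E, (Matrix.fromBlocks Q 0 0 Q').submatrix E E,
    hgr _ _ hP hP', hgr _ _ hQ hQ', ?_, ?_, fun e => ?_⟩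
  · rw [Matrix.submatrix_mul_equiv, Matrix.fromBlocks_multiply]
    simp [a1, b1]
  · rw [Matrix.submatrix_mul_equiv, Matrix.fromBlocks_multiply]
    simp [a2, b2]
  · rw [hb φ hφ e, hb ψ hψ e, Matrix.submatrix_mul_equiv, Matrix.submatrix_mul_equiv,
      Matrix.fromBlocks_multiply, Matrix.fromBlocks_multiply]
    simp [a3, b3]

end

/-- all representations fall into finitely many classes if the good indecomposables do -/
theorem finOn_supp {K : Type} [Field K] {V A : Type} {s t : A → V}
    (hbip : ∀ v : V, (∀ e, s e ≠ v) ∨ (∀ e, t e ≠ v))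
    (H : ∀ (ι : Type) [Fintype ι] (c : ι → V),
      FinOn c {φ : A → Matrix ι ι K | Supp c s t φ ∧ φ ≠ 0 ∧ Good c φ ∧ RIndec c φ})
    (n : ℕ) : ∀ (ι : Type) [Fintype ι] (c : ι → V), Fintype.card ι = n →
      FinOn c {φ : A → Matrix ι ι K | Supp c s t φ} := by
  induction n using Nat.strong_induction_on with
  | _ n ih =>
  intro ι _ c hn
  let T : Option (Option {J : Finset ι // J ≠ ∅ ∧ J ≠ Finset.univ}) → Set (A → Matrix ι ι K) :=
    fun o => match o with
    | none => {0}
    | some none => {φ | Supp c s t φ ∧ φ ≠ 0 ∧ Good c φ ∧ RIndec c φ}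
    | some (some J) => {φ | ∃ φ', Supp c s t φ' ∧ Blk J.1 φ' ∧ RIso c φ φ'}
  apply finOn_iUnion T
  · rintro (_ | _ | ⟨J, hJ1, hJ2⟩)
    · refine ⟨Unit, inferInstance, fun _ => (), ?_⟩
      rintro φ rfl ψ rfl _
      exact ⟨1, 1, gr_one c, gr_one c, one_mul 1, one_mul 1, fun e => by simp⟩
    · exact H ι c
    · have c1 : Fintype.card {i // i ∈ J} < n := by
        rw [← hn, Fintype.card_coe]
        exact (Finset.card_lt_iff_ne_univ J).2 hJ2
      have c2 : Fintype.card {i // ¬ i ∈ J} < n := by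
        rw [← hn]
        obtain ⟨j, hj⟩ := Finset.nonempty_iff_ne_empty.2 hJ1
        exact Fintype.card_subtype_lt (x := j) (by simpa using hj)
      obtain ⟨L1, f1, l1, p1⟩ := ih _ c1 {i // i ∈ J} (fun i => c i) rfl
      obtain ⟨L2, f2, l2, p2⟩ := ih _ c2 {i // ¬ i ∈ J} (fun i => c i) rfl
      let nf : (A → Matrix ι ι K) → (A → Matrix ι ι K) := fun φ =>
        if h : ∃ φ', Supp c s t φ' ∧ Blk J φ' ∧ RIso c φ φ' then h.choose else 0
      have hnf : ∀ φ, (∃ φ', Supp c s t φ' ∧ Blk J φ' ∧ RIso c φ φ') →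
          Supp c s t (nf φ) ∧ Blk J (nf φ) ∧ RIso c φ (nf φ) := by
        intro φ h
        simp only [nf, dif_pos h]
        exact h.choose_spec
      refine ⟨L1 × L2, inferInstance, fun φ => (l1 (res _ (nf φ)), l2 (res _ (nf φ))), ?_⟩
      intro φ hφ ψ hψ h
      obtain ⟨x1, x2, x3⟩ := hnf φ hφ
      obtain ⟨y1, y2, y3⟩ := hnf ψ hψ
      obtain ⟨h1, h2⟩ := Prod.mk.injEq _ _ _ _ ▸ h
      refine (x3.trans ?_).trans y3.symm
      exact riso_blk J x2 y2 (p1 _ (supp_res x1 _) _ (supp_res y1 _) h1)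
        (p2 _ (supp_res x1 _) _ (supp_res y1 _) h2)
  · intro φ hφ
    by_cases h0 : φ = 0
    · exact ⟨none, h0⟩
    by_cases hI : RIndec c φ
    · exact ⟨some none, hφ, h0, good_of_indec hφ hbip hI h0, hI⟩
    · obtain ⟨J, φ', h1, h2, h3, h4, h5⟩ := exists_split hφ hI
      exact ⟨some (some ⟨J, h1, h2⟩), φ', h3, h4, h5⟩

/-- the dimension count -/
theorem not_finOn {K : Type} [Field K] [IsAlgClosed K] {V A ι : Type} [Fintype ι] [Fintype A]
    [Nonempty ι] (s t : A → V) (c : ι → V)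
    (hcard : Fintype.card {x : ι × ι // c x.1 = c x.2} ≤
      Fintype.card {x : A × ι × ι // c x.2.1 = s x.1 ∧ c x.2.2 = t x.1}) :
    ¬ FinOn c {φ : A → Matrix ι ι K | Supp c s t φ} := by
  rintro ⟨L, hL, l, hl⟩
  let Γ := {x : ι × ι // c x.1 = c x.2}
  let Λ := {x : A × ι × ι // c x.2.1 = s x.1 ∧ c x.2.2 = t x.1}
  -- representatives
  let rep : L → (A → Matrix ι ι K) := fun a =>
    if h : ∃ φ, Supp c s t φ ∧ l φ = a then h.choose else 0
  have hrep : ∀ φ, Supp c s t φ → RIso c φ (rep (l φ)) := by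
    intro φ hφ
    have h : ∃ φ', Supp c s t φ' ∧ l φ' = l φ := ⟨φ, hφ, rfl⟩
    simp only [rep, dif_pos h]
    exact hl φ hφ _ h.choose_spec.1 h.choose_spec.2.symm
  let PP : Matrix ι ι (MvPolynomial Γ K) := fun i j =>
    if h : c i = c j then MvPolynomial.X ⟨(i, j), h⟩ else 0
  let z : L → Option Λ → MvPolynomial Γ K := fun a o => match o with
    | none => PP.det
    | some x => (PP.adjugate * (rep a x.1.1).map MvPolynomial.C * PP : Matrix ι ι (MvPolynomial Γ K)) x.1.2.1 x.1.2.2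
  have hlt : Fintype.card Γ < Fintype.card (Option Λ) := by
    rw [Fintype.card_option]; exact Nat.lt_succ_of_le hcard
  choose p hp0 hp using fun a => algdep hlt (z a)
  have key : ∀ x : Option Λ → K, x none ≠ 0 → ∃ a, MvPolynomial.eval x (p a) = 0 := by
    intro x hx
    let φ : A → Matrix ι ι K := fun e i j =>
      if h : c i = s e ∧ c j = t e then x (some ⟨(e, i, j), h⟩) * (x none)⁻¹ else 0
    have hφ : Supp c s t φ := by
      intro e i j h
      by_contra h'
      simp [φ, h'] at h
    obtain ⟨P, Q, hP, hQ, h1, h2, h3⟩ := hrep φ hφ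
    have hPd : P.det ≠ 0 := by
      intro h
      have := congrArg Matrix.det h1
      rw [Matrix.det_mul, h, mul_zero, Matrix.det_one] at this
      exact zero_ne_one this
    obtain ⟨r, hr⟩ := IsAlgClosed.exists_pow_nat_eq (x none * (P.det)⁻¹)
      (n := Fintype.card ι) Fintype.card_pos
    let P' := r • P
    have hP'd : P'.det = x none := by
      simp only [P', Matrix.det_smul, hr]
      field_simp
    have hP' : Gr c P' := by
      intro i j h
      exact hP i j (fun h0 => h (by simp [P', h0]))
    refine ⟨l φ, ?_⟩
    let y : Γ → K := fun γ => P' γ.1.1 γ.1.2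
    have hPP : PP.map (MvPolynomial.eval y) = P' := by
      ext i j
      rw [Matrix.map_apply]
      simp only [PP]
      split_ifs with h
      · simp [y]
      · rw [map_zero]; by_contra h0; exact h (hP' i j (Ne.symm h0))
    have hz : ∀ o, MvPolynomial.eval y (z (l φ) o) = x o := by
      rintro (_ | ⟨⟨e, i, j⟩, h⟩)
      · simp only [z]
        rw [RingHom.map_det, RingHom.mapMatrix_apply, hPP, hP'd]
      · simp only [z]
        have e1 : MvPolynomial.eval y ((PP.adjugate * (rep (l φ) e).map MvPolynomial.C * PP : Matrix ι ι (MvPolynomial Γ K)) i j)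
            = (P'.adjugate * rep (l φ) e * P') i j := by
          have : ((PP.adjugate * (rep (l φ) e).map MvPolynomial.C * PP : Matrix ι ι (MvPolynomial Γ K)).map
              (MvPolynomial.eval y)) = P'.adjugate * rep (l φ) e * P' := by
            rw [Matrix.map_mul, Matrix.map_mul, hPP]
            have e2 : PP.adjugate.map (MvPolynomial.eval y) = P'.adjugate := by
              rw [← hPP]
              exact RingHom.map_adjugate (MvPolynomial.eval y) PP
            rw [e2, Matrix.map_map]
            congr 2
            ext i j
            simp
          exact congrFun (congrFun this i) j
        rw [e1]
        have e3 : P'.adjugate * rep (l φ) e * P' = x none • φ e := by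
          have : rep (l φ) e * P' = P' * φ e := by
            simp only [P', Matrix.mul_smul, Matrix.smul_mul, h3]
          rw [mul_assoc, this, ← mul_assoc, Matrix.adjugate_mul, hP'd, Matrix.smul_mul, one_mul]
        rw [e3, Matrix.smul_apply]
        simp only [φ, dif_pos h, smul_eq_mul]
        field_simp
    have h5 := congrArg (MvPolynomial.eval y) (hp (l φ))
    rw [map_zero] at h5
    rw [← h5]
    have : x = fun o => MvPolynomial.eval y (z (l φ) o) := funext fun o => (hz o).symm
    rw [this]
    simp only [MvPolynomial.eval, MvPolynomial.aeval_def, MvPolynomial.coe_eval₂Hom]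
    have e6 := MvPolynomial.eval₂_comp_left (MvPolynomial.eval y) MvPolynomial.C (z (l φ)) (p (l φ))
    simp only [MvPolynomial.eval, MvPolynomial.coe_eval₂Hom, MvPolynomial.algebraMap_eq] at e6 ⊢
    rw [e6]
    congr 1
    ext; simp
  have := Fintype.ofFinite L
  have hprod : (MvPolynomial.X none * ∏ a, p a : MvPolynomial (Option Λ) K) ≠ 0 :=
    mul_ne_zero (MvPolynomial.X_ne_zero _) (Finset.prod_ne_zero_iff.2 fun a _ => hp0 a)
  apply hprod
  apply MvPolynomial.funext
  intro x
  rw [map_mul, map_prod, map_zero, MvPolynomial.eval_X]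
  by_cases hx : x none = 0
  · rw [hx, zero_mul]
  · obtain ⟨a, ha⟩ := key x hx
    rw [Finset.prod_eq_zero (Finset.mem_univ a) ha, mul_zero]


section Comodule

variable {K : Type} [Field K] {C : Type} [AddCommGroup C] [Module K C] [Coalgebra K C]
  {ι : Type} [Fintype ι]

/-- the coaction given by a matrix of coefficients -/
noncomputable def rho (m : ι → ι → C) : (ι → K) →ₗ[K] (ι → K) ⊗[K] C :=
  ∑ j, (LinearMap.proj j : (ι → K) →ₗ[K] K).smulRight
    (∑ i, (Pi.single i (1 : K) : ι → K) ⊗ₜ[K] m i j)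

theorem rho_apply (m : ι → ι → C) (v : ι → K) :
    rho m v = ∑ j, v j • ∑ i, (Pi.single i (1 : K) : ι → K) ⊗ₜ[K] m i j := by
  simp [rho]

theorem rho_single (m : ι → ι → C) (k : ι) :
    rho m (Pi.single k (1 : K)) = ∑ i, (Pi.single i (1 : K) : ι → K) ⊗ₜ[K] m i k := by
  rw [rho_apply, Finset.sum_eq_single k]
  · simp
  · intro b _ hb; simp [hb]
  · simp

/-- the comodule given by a matrix of coefficients -/
noncomputable def mkComod (m : ι → ι → C)
    (h1 : ∀ i j, Coalgebra.counit (R := K) (m i j) = if i = j then 1 else 0)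
    (h2 : ∀ i j, Coalgebra.comul (R := K) (m i j) = ∑ k, m i k ⊗ₜ[K] m k j) : Comod K C where
  carrier := ι → K
  ρ := rho m
  counit_comp := by
    intro v
    rw [rho_apply]
    simp only [map_sum, map_smul, LinearMap.lTensor_tmul, h1, TensorProduct.rid_tmul]
    ext a
    simp [Finset.sum_apply, Pi.single_apply, ite_smul]
  coassoc := by
    intro v
    rw [rho_apply]
    simp only [map_sum, map_smul, LinearMap.lTensor_tmul, h2, LinearMap.rTensor_tmul, rho_single,
      TensorProduct.sum_tmul, TensorProduct.tmul_sum, TensorProduct.assoc_tmul]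
    refine Finset.sum_congr rfl fun j _ => ?_
    rw [Finset.sum_comm]

theorem hom_entry {m m' : ι → ι → C} (f : (ι → K) →ₗ[K] (ι → K))
    (hf : ∀ v, rho m' (f v) = LinearMap.rTensor C f (rho m v)) (i j : ι) :
    ∑ k, LinearMap.toMatrix' f k j • m' i k = ∑ k, LinearMap.toMatrix' f i k • m k j := by
  have h := congrArg (fun y => TensorProduct.lid K C
    (LinearMap.rTensor C (LinearMap.proj i : (ι → K) →ₗ[K] K) y)) (hf (Pi.single j 1))
  simp only [rho_single] at h
  rw [rho_apply] at h
  simp only [map_sum, map_smul, LinearMap.rTensor_tmul, TensorProduct.lid_tmul,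
    LinearMap.proj_apply, Pi.single_apply, ite_smul, one_smul, zero_smul] at h
  simpa [LinearMap.toMatrix'_apply] using h

theorem comodIso_symm_trans {M N R : Comod K C} (h1 : ComodIso K C M R) (h2 : ComodIso K C N R) :
    ∃ (f : ComodHom K C M N) (h : ComodHom K C N M), h.toLin ∘ₗ f.toLin = LinearMap.id := by
  have inv : ∀ {M R : Comod K C} (f : ComodHom K C M R), Function.Bijective f.toLin →
      ∃ h : ComodHom K C R M, h.toLin ∘ₗ f.toLin = LinearMap.id ∧
        f.toLin ∘ₗ h.toLin = LinearMap.id := by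
    intro M R f hf
    let E := LinearEquiv.ofBijective f.toLin hf
    have e1 : E.symm.toLinearMap ∘ₗ f.toLin = LinearMap.id := by
      ext x; exact E.symm_apply_apply x
    have e2 : f.toLin ∘ₗ E.symm.toLinearMap = LinearMap.id := by
      ext x; exact E.apply_symm_apply x
    refine ⟨⟨E.symm.toLinearMap, fun r => ?_⟩, e1, e2⟩
    have h3 := f.compat (E.symm r)
    have h4 : f.toLin (E.symm r) = r := E.apply_symm_apply r
    rw [h4] at h3
    rw [h3]
    change _ = (LinearMap.rTensor C E.symm.toLinearMap ∘ₗ LinearMap.rTensor C f.toLin) _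
    rw [← LinearMap.rTensor_comp, e1, LinearMap.rTensor_id]
    rfl
  have comp : ∀ {M N R : Comod K C} (f : ComodHom K C M N) (h : ComodHom K C N R),
      ∃ k : ComodHom K C M R, k.toLin = h.toLin ∘ₗ f.toLin := by
    intro M N R f h
    refine ⟨⟨h.toLin ∘ₗ f.toLin, fun x => ?_⟩, rfl⟩
    rw [LinearMap.comp_apply, h.compat, f.compat, LinearMap.rTensor_comp]
    rfl
  obtain ⟨a, ha⟩ := h1
  obtain ⟨b, hb⟩ := h2
  obtain ⟨a', ha1, ha2⟩ := inv a ha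
  obtain ⟨b', hb1, hb2⟩ := inv b hb
  obtain ⟨f, hf⟩ := comp a b'
  obtain ⟨h, hh⟩ := comp b a'
  refine ⟨f, h, ?_⟩
  rw [hf, hh]
  ext x
  have q1 := LinearMap.congr_fun hb2 (a.toLin x)
  have q2 := LinearMap.congr_fun ha1 x
  simp only [LinearMap.comp_apply, LinearMap.id_apply] at q1 q2 ⊢
  rw [q1, q2]

theorem hasDim_aux (γ : ι → C) (n : ι → ι → C) (r : ι → ℕ)
    (hγ : ∀ i, IsGrouplike K C (γ i)) (hn : ∀ i j, n i j ≠ 0 → r i < r j) :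
    ∃ (k : ℕ) (F : Fin (k+1) → Submodule K (ι → K)) (g : Fin k → C),
    F 0 = ⊥ ∧ F (Fin.last k) = ⊤ ∧
    (∀ i : Fin k, F i.castSucc ≤ F i.succ) ∧
    (∀ i : Fin (k+1), ∀ m ∈ F i, rho (fun i j => (if i = j then γ j else 0) + n i j) m ∈
      LinearMap.range (LinearMap.rTensor C (F i).subtype)) ∧
    (∀ i : Fin k, IsGrouplike K C (g i)) ∧
    (∀ i : Fin k, ∃ m : ι → K, m ∈ F i.succ ∧ m ∉ F i.castSucc ∧
        F i.succ = F i.castSucc ⊔ Submodule.span K {m}) ∧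
    (∀ i : Fin k, ∀ m ∈ F i.succ,
        rho (fun i j => (if i = j then γ j else 0) + n i j) m - m ⊗ₜ[K] (g i) ∈
          LinearMap.range (LinearMap.rTensor C (F i.castSucc).subtype)) ∧
    (∀ h : C, Nat.card {i // γ i = h} = Nat.card {i : Fin k // g i = h}) := by
  obtain ⟨σ, hσ⟩ : ∃ σ : Fin (Fintype.card ι) ≃ ι, ∀ a b, n (σ a) (σ b) ≠ 0 → a < b := by
    let e0 := Fintype.equivFin ι
    refine ⟨(Tuple.sort (r ∘ e0.symm)).trans e0.symm, fun a b h => ?_⟩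
    have := hn _ _ h
    exact (Tuple.monotone_sort (r ∘ e0.symm)).reflect_lt this
  let Fl : ℕ → Submodule K (ι → K) := fun a =>
    { carrier := {v | ∀ b : Fin (Fintype.card ι), a ≤ b.val → v (σ b) = 0}
      add_mem' := by
        intro v w hv hw b hb
        rw [Pi.add_apply, hv b hb, hw b hb, add_zero]
      zero_mem' := by intro b _; rfl
      smul_mem' := by
        intro k v hv b hb
        rw [Pi.smul_apply, hv b hb, smul_zero] }
  have hFl : ∀ a v, v ∈ Fl a ↔ ∀ b : Fin (Fintype.card ι), a ≤ b.val → v (σ b) = 0 :=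
    fun a v => Iff.rfl
  have hs : ∀ a (b : Fin (Fintype.card ι)), b.val < a → (Pi.single (σ b) (1 : K) : ι → K) ∈ Fl a := by
    intro a b hb
    rw [hFl]
    intro b' hb'
    rw [Pi.single_apply, if_neg]
    intro h
    have := σ.injective h
    subst this
    omega
  have hr : ∀ a (b : Fin (Fintype.card ι)) (x : C), b.val < a →
      (Pi.single (σ b) (1 : K) : ι → K) ⊗ₜ[K] x ∈
        LinearMap.range (LinearMap.rTensor C (Fl a).subtype) := by
    intro a b x hb
    exact ⟨(⟨_, hs a b hb⟩ : Fl a) ⊗ₜ[K] x, by rw [LinearMap.rTensor_tmul]; rfl⟩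
  refine ⟨Fintype.card ι, fun a => Fl a.val, fun a => γ (σ a), ?_, ?_, ?_, ?_, ?_, ?_, ?_, ?_⟩
  · rw [eq_bot_iff]
    intro v hv
    have : v = 0 := by
      funext i
      have := hv (σ.symm i) (Nat.zero_le _)
      simpa using this
    rw [this]; exact Submodule.zero_mem _
  · rw [eq_top_iff]
    intro v _ b hb
    have := b.isLt
    simp only [Fin.val_last] at hb
    omega
  · intro a v hv b hb
    apply hv b
    simp only [Fin.val_succ, Fin.val_castSucc] at hb ⊢
    omega
  · intro a v hv
    rw [rho_apply]
    refine Submodule.sum_mem _ fun j _ => ?_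
    by_cases hj : v j = 0
    · rw [hj, zero_smul]; exact Submodule.zero_mem _
    refine Submodule.smul_mem _ _ (Submodule.sum_mem _ fun i _ => ?_)
    obtain ⟨b, rfl⟩ := σ.surjective j
    obtain ⟨b', rfl⟩ := σ.surjective i
    have hb : b.val < a.val := by
      by_contra h
      exact hj (hv b (not_lt.mp h))
    by_cases hbb : b' = b
    · subst hbb; exact hr _ _ _ hb
    · by_cases h0 : n (σ b') (σ b) = 0
      · have : ¬ σ b' = σ b := fun h => hbb (σ.injective h)
        rw [if_neg this, h0, add_zero, TensorProduct.tmul_zero]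
        exact Submodule.zero_mem _
      · exact hr _ _ _ (lt_trans (hσ _ _ h0) hb)
  · intro a; exact hγ _
  · intro a
    refine ⟨(Pi.single (σ a) (1 : K) : ι → K), hs _ a (by simp), ?_, ?_⟩
    · intro h
      have := h a (by simp)
      simp at this
    · apply le_antisymm
      · intro v hv
        rw [Submodule.mem_sup]
        refine ⟨v - v (σ a) • (Pi.single (σ a) (1 : K) : ι → K), ?_,
          v (σ a) • (Pi.single (σ a) (1 : K) : ι → K),
          Submodule.smul_mem _ _ (Submodule.mem_span_singleton_self _), sub_add_cancel _ _⟩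
        intro b hb
        by_cases hba : b = a
        · subst hba; simp
        · have h3 : ¬ σ b = σ a := fun h => hba (σ.injective h)
          have : v (σ b) = 0 := hv b (by
            have : b.val ≠ a.val := fun h => hba (Fin.ext h)
            simp only [Fin.val_succ, Fin.val_castSucc] at hb ⊢
            omega)
          simp [this, h3]
      · refine sup_le ?_ ?_
        · intro v hv b hb
          apply hv b
          simp only [Fin.val_succ, Fin.val_castSucc] at hb ⊢
          omega
        · rw [Submodule.span_singleton_le_iff_mem]
          exact hs _ a (by simp)
  · intro a v hv
    have hvs : (v : ι → K) = ∑ j, v j • (Pi.single j (1 : K) : ι → K) := by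
      ext k
      simp [Pi.single_apply]
    have hvt : ∀ y : C, (v : ι → K) ⊗ₜ[K] y =
        ∑ j, v j • ((Pi.single j (1 : K) : ι → K) ⊗ₜ[K] y) := by
      intro y
      conv_lhs => rw [hvs, TensorProduct.sum_tmul]
      exact Finset.sum_congr rfl fun j _ => rfl
    have : rho (fun i j => (if i = j then γ j else 0) + n i j) v - (v : ι → K) ⊗ₜ[K] γ (σ a) =
        ∑ j, v j • ((Pi.single j (1 : K) : ι → K) ⊗ₜ[K] (γ j - γ (σ a)) +
          ∑ i, (Pi.single i (1 : K) : ι → K) ⊗ₜ[K] n i j) := by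
      rw [rho_apply, hvt, ← Finset.sum_sub_distrib]
      refine Finset.sum_congr rfl fun j _ => ?_
      refine (smul_sub _ _ _).symm.trans ?_
      congr 1
      simp only [TensorProduct.tmul_add, Finset.sum_add_distrib, TensorProduct.tmul_sub]
      rw [Finset.sum_eq_single j]
      · simp; abel
      · intro b _ hb; simp [hb]
      · simp
    rw [this]
    refine Submodule.sum_mem _ fun j _ => ?_
    by_cases hj : v j = 0
    · rw [hj, zero_smul]; exact Submodule.zero_mem _
    obtain ⟨b, rfl⟩ := σ.surjective j
    have hb : b.val < a.val + 1 := by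
      by_contra h
      exact hj (hv b (by simpa using h))
    refine Submodule.smul_mem _ _ (Submodule.add_mem _ ?_ (Submodule.sum_mem _ fun i _ => ?_))
    · by_cases hba : b = a
      · subst hba; rw [sub_self, TensorProduct.tmul_zero]; exact Submodule.zero_mem _
      · have : b.val ≠ a.val := fun h => hba (Fin.ext h)
        exact hr _ _ _ (by simp only [Fin.val_castSucc]; omega)
    · obtain ⟨b', rfl⟩ := σ.surjective i
      by_cases h0 : n (σ b') (σ b) = 0
      · rw [h0, TensorProduct.tmul_zero]
        exact Submodule.zero_mem _
      · have h5 : b'.val < b.val := hσ _ _ h0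
        exact hr _ _ _ (by simp only [Fin.val_castSucc]; omega)
  · intro h
    exact (Nat.card_congr (σ.subtypeEquiv (fun a => Iff.rfl))).symm

theorem hasDimVector (γ : ι → C) (n : ι → ι → C) (r : ι → ℕ)
    (hγ : ∀ i, IsGrouplike K C (γ i)) (hn : ∀ i j, n i j ≠ 0 → r i < r j)
    (h1 : ∀ i j, Coalgebra.counit (R := K) ((if i = j then γ j else 0) + n i j)
      = if i = j then 1 else 0)
    (h2 : ∀ i j, Coalgebra.comul (R := K) ((if i = j then γ j else 0) + n i j)
      = ∑ k, ((if i = k then γ k else 0) + n i k) ⊗ₜ[K] ((if k = j then γ j else 0) + n k j)) :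
    HasDimVector K C (mkComod (fun i j => (if i = j then γ j else 0) + n i j) h1 h2)
      (fun h => Nat.card {i // γ i = h}) :=
  hasDim_aux γ n r hγ hn

end Comodule

section Main

variable {K : Type} [Field K] {C : Type} [AddCommGroup C] [Module K C] [Coalgebra K C]

theorem counit_skew {g h x : C} (hg : IsGrouplike K C g) (hh : IsGrouplike K C h)
    (hx : x ∈ skewPrim K C g h) : Coalgebra.counit (R := K) x = 0 := by
  rw [mem_skewPrim] at hx
  have h1 := Coalgebra.rTensor_counit_comul (R := K) x
  rw [hx, map_add, LinearMap.rTensor_tmul, LinearMap.rTensor_tmul, hg.1] at h1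
  have h2 := congrArg (fun y => Coalgebra.counit (R := K) (TensorProduct.lid K C y)) h1
  simp only [map_add, TensorProduct.lid_tmul, map_smul, hh.1, smul_eq_mul, mul_one, one_mul] at h2
  simpa using h2

theorem exists_functional {V' A' A : Type} {g : V' → C} {x : A' → C}
    (hind : LinearIndependent K (Sum.elim g x)) {F : A → A'} (hF : Function.Injective F) (e : A) :
    ∃ ξ : C →ₗ[K] K, (∀ v, ξ (g v) = 0) ∧ ∀ e', ξ (x (F e')) = if e' = e then 1 else 0 := by
  let B := Module.Basis.sumExtend hind
  have hB : ∀ y, B (Sum.inl y) = Sum.elim g x y := fun y => by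
    simp [B, Module.Basis.sumExtend]
    rfl
  refine ⟨B.coord (Sum.inl (Sum.inr (F e))), fun v => ?_, fun e' => ?_⟩
  · have : g v = B (Sum.inl (Sum.inl v)) := (hB (Sum.inl v)).symm
    rw [this, Module.Basis.coord_apply, Module.Basis.repr_self]
    simp
  · have : x (F e') = B (Sum.inl (Sum.inr (F e'))) := (hB (Sum.inr (F e'))).symm
    rw [this, Module.Basis.coord_apply, Module.Basis.repr_self, Finsupp.single_apply]
    simp [hF.eq_iff]

theorem finOn_good {V' A' : Type} {s' t' : A' → V'} {g : V' → C} {x : A' → C}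
    (hgl : ∀ v, IsGrouplike K C (g v))
    (hx : ∀ e, x e ∈ skewPrim K C (g (s' e)) (g (t' e)))
    (hind : LinearIndependent K (Sum.elim g x))
    {V A : Type} [Fintype A] {s t : A → V}
    (hbip : ∀ v : V, (∀ e, s e ≠ v) ∨ (∀ e, t e ≠ v))
    {p : V → V'} {F : A → A'} (hF : Function.Injective F)
    (hqs : ∀ e, s' (F e) = p (s e)) (hqt : ∀ e, t' (F e) = p (t e))
    (hD : DiscreteCorepType K C) (ι : Type) [Fintype ι] (c : ι → V) :
    FinOn c {φ : A → Matrix ι ι K | Supp c s t φ ∧ φ ≠ 0 ∧ Good c φ ∧ RIndec c φ} := by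
  let γ : ι → C := fun i => g (p (c i))
  let n : (A → Matrix ι ι K) → ι → ι → C := fun φ i j => ∑ e, φ e i j • x (F e)
  let r : ι → ℕ := fun i => if ∃ e, t e = c i then 1 else 0
  have hγ : ∀ i, IsGrouplike K C (γ i) := fun i => hgl _
  have hn : ∀ φ, Supp c s t φ → ∀ i j, n φ i j ≠ 0 → r i = 0 ∧ r j = 1 := by
    intro φ hφ i j h
    obtain ⟨e, _, he⟩ := Finset.exists_ne_zero_of_sum_ne_zero h
    have h0 : φ e i j ≠ 0 := fun h => he (by rw [h, zero_smul])
    obtain ⟨h1, h2⟩ := hφ e i j h0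
    constructor
    · have : ¬ ∃ e', t e' = c i := by
        rintro ⟨e', he'⟩
        rcases hbip (c i) with H | H
        · exact H e h1.symm
        · exact H e' he'
      simp only [r, if_neg this]
    · have : ∃ e', t e' = c j := ⟨e, h2.symm⟩
      simp only [r, if_pos this]
  have hε : ∀ φ i j, Coalgebra.counit (R := K) (n φ i j) = 0 := by
    intro φ i j
    simp only [n, map_sum, map_smul]
    refine Finset.sum_eq_zero fun e _ => ?_
    rw [counit_skew (hgl _) (hgl _) (hx (F e)), smul_zero]
  have hΔ : ∀ φ, Supp c s t φ → ∀ i j, Coalgebra.comul (R := K) (n φ i j)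
      = γ i ⊗ₜ[K] n φ i j + n φ i j ⊗ₜ[K] γ j := by
    intro φ hφ i j
    simp only [n, map_sum, map_smul, TensorProduct.tmul_sum, TensorProduct.sum_tmul]
    rw [← Finset.sum_add_distrib]
    refine Finset.sum_congr rfl fun e _ => ?_
    by_cases h0 : φ e i j = 0
    · simp [h0]
    · obtain ⟨h1, h2⟩ := hφ e i j h0
      have h3 := hx (F e)
      rw [mem_skewPrim, hqs, hqt, ← h1, ← h2] at h3
      rw [h3, smul_add, TensorProduct.tmul_smul]
      rfl
  have h1 : ∀ φ i j, Coalgebra.counit (R := K) ((if i = j then γ j else 0) + n φ i j)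
      = if i = j then 1 else 0 := by
    intro φ i j
    rw [map_add, hε, add_zero]
    split_ifs
    · exact (hγ j).1
    · exact map_zero _
  have h2 : ∀ φ, Supp c s t φ → ∀ i j,
      Coalgebra.comul (R := K) ((if i = j then γ j else 0) + n φ i j)
      = ∑ k, ((if i = k then γ k else 0) + n φ i k) ⊗ₜ[K]
        ((if k = j then γ j else 0) + n φ k j) := by
    intro φ hφ i j
    have z : ∀ k, n φ i k ⊗ₜ[K] n φ k j = 0 := by
      intro k
      by_cases ha : n φ i k = 0
      · rw [ha, TensorProduct.zero_tmul]
      · by_cases hb : n φ k j = 0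
        · rw [hb, TensorProduct.tmul_zero]
        · have q1 := (hn φ hφ i k ha).2
          have q2 := (hn φ hφ k j hb).1
          omega
    simp only [TensorProduct.add_tmul, TensorProduct.tmul_add, z, Finset.sum_add_distrib]
    rw [map_add, hΔ φ hφ]
    have s1 : ∑ k, (if i = k then γ k else 0) ⊗ₜ[K] n φ k j = γ i ⊗ₜ[K] n φ i j := by
      rw [Finset.sum_eq_single i]
      · simp
      · intro b _ hb; simp [Ne.symm hb]
      · simp
    have s2 : ∑ k, n φ i k ⊗ₜ[K] (if k = j then γ j else 0) = n φ i j ⊗ₜ[K] γ j := by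
      rw [Finset.sum_eq_single j]
      · simp
      · intro b _ hb; simp [hb]
      · simp
    have s3 : ∑ k, (if i = k then γ k else 0) ⊗ₜ[K] (if k = j then γ j else 0) =
        Coalgebra.comul (R := K) (if i = j then γ j else 0) := by
      rw [Finset.sum_eq_single i]
      · by_cases hij : i = j
        · subst hij; simp [(hγ i).2]
        · simp [hij]
      · intro b _ hb; simp [Ne.symm hb]
      · simp
    rw [s1, s2, s3]
    simp
    abel
  let M : ∀ φ, Supp c s t φ → Comod K C := fun φ hφ => mkComod _ (h1 φ) (h2 φ hφ)
  have hcomm : ∀ φ ψ (hφ : Supp c s t φ) (hψ : Supp c s t ψ) (f : (ι → K) →ₗ[K] (ι → K)),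
      (∀ v, rho (fun i j => (if i = j then γ j else 0) + n ψ i j) (f v) = LinearMap.rTensor C f
        (rho (fun i j => (if i = j then γ j else 0) + n φ i j) v)) →
      ∀ e, LinearMap.toMatrix' f * φ e = ψ e * LinearMap.toMatrix' f := by
    intro φ ψ hφ hψ f hf e
    obtain ⟨ξ, hξ1, hξ2⟩ := exists_functional hind hF e
    have hξ : ∀ χ i j, ξ ((if i = j then γ j else 0) + n χ i j) = χ e i j := by
      intro χ i j
      have q1 : ξ (if i = j then γ j else 0) = 0 := by
        split_ifs
        · exact hξ1 _
        · exact map_zero _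
      rw [map_add, q1, zero_add]
      simp [n, hξ2]
    ext i j
    have := congrArg ξ (hom_entry f hf i j)
    simp only [map_sum, map_smul, hξ, smul_eq_mul] at this
    rw [Matrix.mul_apply, Matrix.mul_apply, ← this]
    exact Finset.sum_congr rfl fun k _ => mul_comm _ _
  obtain ⟨N, R, hR⟩ := hD (fun h => Nat.card {i // γ i = h})
  have hM : ∀ φ (hφ : Supp c s t φ), φ ≠ 0 → Good c φ → RIndec c φ →
      ∃ i, ComodIso K C (M φ hφ) (R i) := by
    intro φ hφ h0 hG hI
    apply hR
    · constructor
      · have : Nonempty ι := by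
          by_contra hne
          apply h0
          funext e
          ext i j
          exact absurd ⟨i⟩ hne
        obtain ⟨i⟩ := this
        refine ⟨(Pi.single i (1 : K) : ι → K), fun h => ?_⟩
        have h' : (Pi.single i (1 : K) : ι → K) = (0 : ι → K) := h
        have := congrFun h' i
        rw [Pi.single_eq_same] at this
        exact one_ne_zero this
      · rintro ⟨f, hf⟩ hff
        change (ι → K) →ₗ[K] (ι → K) at f
        change f ∘ₗ f = f at hff
        change f = 0 ∨ f = LinearMap.id
        have hff' : LinearMap.toMatrix' f * LinearMap.toMatrix' f = LinearMap.toMatrix' f := by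
          rw [← LinearMap.toMatrix'_comp, hff]
        rcases full_indec hφ hG hI (hcomm φ φ hφ hφ f hf) hff' with h | h
        · left
          exact LinearMap.toMatrix'.injective (h.trans (map_zero _).symm)
        · right
          exact LinearMap.toMatrix'.injective (h.trans LinearMap.toMatrix'_id.symm)
    · refine hasDimVector γ (n φ) r hγ (fun i j h => ?_) (h1 φ) (h2 φ hφ)
      obtain ⟨q1, q2⟩ := hn φ hφ i j h
      omega
  let l : (A → Matrix ι ι K) → Option (Fin N) := fun φ =>
    if h : ∃ (i : Fin N) (hφ : Supp c s t φ), ComodIso K C (M φ hφ) (R i) then some h.choose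
      else none
  refine ⟨Option (Fin N), inferInstance, l, ?_⟩
  rintro φ ⟨a1, a2, a3, a4⟩ ψ ⟨b1, b2, b3, b4⟩ hl
  have ha : ∃ (i : Fin N) (hφ : Supp c s t φ), ComodIso K C (M φ hφ) (R i) := by
    obtain ⟨i, hi⟩ := hM φ a1 a2 a3 a4
    exact ⟨i, a1, hi⟩
  have hb : ∃ (i : Fin N) (hφ : Supp c s t ψ), ComodIso K C (M ψ hφ) (R i) := by
    obtain ⟨i, hi⟩ := hM ψ b1 b2 b3 b4
    exact ⟨i, b1, hi⟩
  simp only [l, dif_pos ha, dif_pos hb, Option.some.injEq] at hl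
  obtain ⟨_, ha'⟩ := ha.choose_spec
  obtain ⟨_, hb'⟩ := hb.choose_spec
  rw [← hl] at hb'
  obtain ⟨⟨f, hf⟩, ⟨h, hh⟩, hhf⟩ := comodIso_symm_trans ha' hb'
  change (ι → K) →ₗ[K] (ι → K) at f
  change (ι → K) →ₗ[K] (ι → K) at h
  change h ∘ₗ f = LinearMap.id at hhf
  refine riso_of_iso a1 b1 a3 (hcomm φ ψ a1 b1 f hf) (hcomm ψ φ b1 a1 h hh) ?_
  rw [← LinearMap.toMatrix'_comp, hhf, LinearMap.toMatrix'_id]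

end Main

end QR

theorem not_discrete_of_quotient_of_bipartite_nonDynkin
    (K : Type) [Field K] [IsAlgClosed K]
    (C : Type) [AddCommGroup C] [Module K C] [Coalgebra K C]
    (hpointed : IsPointedCoalgebra K C)
    -- `Q'` : a subquiver of the Ext-quiver of `C`, with distinct grouplike vertices `g v`
    -- and arrows realized by jointly linearly independent skew primitives `x e`
    (V' A' : Type) (s' t' : A' → V') (g : V' → C) (x : A' → C)
    (hg : Function.Injective g) (hgl : ∀ v, IsGrouplike K C (g v))
    (hx : ∀ e, x e ∈ skewPrim K C (g (s' e)) (g (t' e)))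
    (hind : LinearIndependent K (Sum.elim g x))
    -- `Q` : a finite bipartite quiver whose underlying graph is not a disjoint union of
    -- Dynkin diagrams (equivalently, whose Tits form is not positive definite)
    (V A : Type) [Fintype V] [Fintype A] (s t : A → V)
    (hbip : ∀ v : V, (∀ e, s e ≠ v) ∨ (∀ e, t e ≠ v))
    (hnondynkin : ∃ d : V → ℤ, d ≠ 0 ∧ ∑ v, (d v) ^ 2 ≤ ∑ e, d (s e) * d (t e))
    -- `q : Q → Q'` : a quotient-quiver homomorphism, gluing vertices and preserving arrows
    (p : V → V') (F : A → A')
    (hp : Function.Surjective p) (hF : Function.Bijective F)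
    (hqs : ∀ e, s' (F e) = p (s e)) (hqt : ∀ e, t' (F e) = p (t e)) :
    ¬ DiscreteCorepType K C := by
  classical
  intro hD
  obtain ⟨d, hd0, hd⟩ := hnondynkin
  obtain ⟨v0, hv0⟩ := Function.ne_iff.mp hd0
  have hne : Nonempty (Σ v, Fin (d v).natAbs) :=
    ⟨⟨v0, ⟨0, Int.natAbs_pos.mpr hv0⟩⟩⟩
  have h1 := QR.finOn_supp (K := K) hbip
    (fun ι _ c => QR.finOn_good hgl hx hind hbip hF.injective hqs hqt hD ι c) _
    (Σ v, Fin (d v).natAbs) Sigma.fst rfl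
  refine QR.not_finOn s t _ ?_ h1
  have e1 : Fintype.card {y : (Σ v, Fin (d v).natAbs) × (Σ v, Fin (d v).natAbs) // y.1.1 = y.2.1}
      = ∑ v, (d v).natAbs * (d v).natAbs := by
    rw [Fintype.card_subtype, Finset.card_filter, Fintype.sum_prod_type]
    simp only [Fintype.sum_sigma]
    trans ∑ v, ∑ _a : Fin (d v).natAbs, ∑ w, ∑ _b : Fin (d w).natAbs, (if v = w then 1 else 0)
    · refine Finset.sum_congr rfl fun v _ => Finset.sum_congr rfl fun a _ =>
        Finset.sum_congr rfl fun w _ => Finset.sum_congr rfl fun b _ => ?_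
      congr
    · simp only [Finset.sum_const, Finset.card_univ, Fintype.card_fin, smul_eq_mul, mul_ite, mul_one, mul_zero, Finset.sum_ite_eq, Finset.sum_ite_eq', Finset.mem_univ, if_true, Finset.sum_const_zero]
  have e2 : Fintype.card {y : A × (Σ v, Fin (d v).natAbs) × (Σ v, Fin (d v).natAbs) //
      y.2.1.1 = s y.1 ∧ y.2.2.1 = t y.1}
      = ∑ e, (d (s e)).natAbs * (d (t e)).natAbs := by
    rw [Fintype.card_subtype, Finset.card_filter, Fintype.sum_prod_type]
    refine Finset.sum_congr rfl fun e _ => ?_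
    rw [Fintype.sum_prod_type]
    simp only [Fintype.sum_sigma]
    trans ∑ v, ∑ _a : Fin (d v).natAbs, ∑ w, ∑ _b : Fin (d w).natAbs, (if v = s e then (if w = t e then 1 else 0) else 0)
    · refine Finset.sum_congr rfl fun v _ => Finset.sum_congr rfl fun a _ =>
        Finset.sum_congr rfl fun w _ => Finset.sum_congr rfl fun b _ => ?_
      rw [← ite_and]
    · simp only [Finset.sum_const, Finset.card_univ, Fintype.card_fin, smul_eq_mul, mul_ite, mul_one, mul_zero, Finset.sum_ite_eq, Finset.sum_ite_eq', Finset.mem_univ, if_true, Finset.sum_const_zero]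
      rw [Finset.sum_eq_single (s e)]
      · simp
      · intro b _ hb; simp [hb]
      · simp
  have e3 : ∑ v, (d v).natAbs * (d v).natAbs ≤ ∑ e, (d (s e)).natAbs * (d (t e)).natAbs := by
    zify
    calc ∑ v, |d v| * |d v| = ∑ v, d v ^ 2 := by
          refine Finset.sum_congr rfl fun v _ => ?_
          rw [abs_mul_abs_self, sq]
      _ ≤ ∑ e, d (s e) * d (t e) := hd
      _ ≤ ∑ e, |d (s e)| * |d (t e)| := by
          refine Finset.sum_le_sum fun e _ => ?_
          rw [← abs_mul]
          exact le_abs_self _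
  convert e1.trans_le (e3.trans_eq e2.symm)
end

section
/- Let H be a pointed Hopf algebra and Q the Ext-quiver of the category of right H-comodules. Then for any two grouplikes g, h of H, the star subquivers Star(g) and Star(h) are isomorphic as quivers. Consequently, Q is homogeneous: there exist cardinals n and p such that at every vertex of Q, exactly n arrows go out to other vertices, exactly n arrows come in from other vertices, and exactly p loops exist. -/
open TensorProduct



open scoped Classical

section Pointed

variable (K : Type) [CommRing K] (H : Type) [Ring H] [Bialgebra K H]

/-- `g` is a grouplike element belonging to the subcoalgebra `B`. -/
def grouplikeIn (B : Submodule K H) (g : H) : Prop := IsGrouplike K H g ∧ g ∈ B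

/-- In the Ext-quiver of the subcoalgebra `B`, there are exactly `c` arrows from the
grouplike `g` to the grouplike `h` : since the trivial skew primitive `g - h` is nonzero
precisely when `g ≠ h`, this says `dim (P(g,h) ⊓ B) = c + 1` for `g ≠ h`, and
`dim (P(g,g) ⊓ B) = c` for loops. -/
def arrowsEq (B : Submodule K H) (g h : H) (c : ℕ) : Prop :=
  Module.rank K ↥(skewPrim K H g h ⊓ B) = if g = h then (c : Cardinal) else (c : Cardinal) + 1

/-- The number of arrows from `g` to `h` in the Ext-quiver, as a cardinal: the dimension of
the space of skew primitives modulo the trivial ones. -/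
noncomputable def ntRank (g h : H) : Cardinal :=
  Module.rank K
    (↥(skewPrim K H g h) ⧸
      Submodule.comap (skewPrim K H g h).subtype (Submodule.span K {g - h}))

/-- Two grouplikes are linked in `D` if there is a nontrivial skew primitive (in either
direction) between them lying in `D`. -/
def LinkedIn (D : Submodule K H) (g h : H) : Prop :=
  ∃ x ∈ D, (x ∈ skewPrim K H g h ∨ x ∈ skewPrim K H h g) ∧ x ∉ Submodule.span K {g - h}

/-- The Ext-quiver of the subcoalgebra `D` is connected. -/
def ConnectedOn (D : Submodule K H) : Prop :=
  ∀ g h : H, IsGrouplike K H g → g ∈ D → IsGrouplike K H h → h ∈ D →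
    Relation.ReflTransGen (LinkedIn K H D) g h

/-- `B` is the link-indecomposable component containing `1` : a subcoalgebra containing `1`,
maximal with respect to its Ext-quiver being connected. -/
structure IsLIC1 (B : Submodule K H) : Prop where
  subcoalg : IsSubcoalgebra K H B
  one_mem : (1 : H) ∈ B
  connected : ConnectedOn K H B
  maximal : ∀ B' : Submodule K H, IsSubcoalgebra K H B' → ConnectedOn K H B' →
    B ≤ B' → B' = B

end Pointed

/-- `a^i * a'^(-i)`, i.e. the `i`-th power (for `i : ℤ`) of `a` when `a'` is a two-sided
inverse of `a`. -/
def zp {B : Type} [Monoid B] (a a' : B) (i : ℤ) : B := a ^ i.toNat * a' ^ (-i).toNat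

section Hopf

variable (K : Type) [CommRing K] (H : Type) [Ring H] [HopfAlgebra K H]

/-- The antipode applied to an element; for a grouplike `g` this is its inverse `g⁻¹`. -/
noncomputable def inv' (g : H) : H := HopfAlgebra.antipode (R := K) g

/-- The Ext-quiver of the subcoalgebra `B` is the (possibly folded) grid quiver `Q^{m,n}` :
the grouplikes of `B` form the group `⟨a, b | ab = ba, aᵐ = bⁿ⟩`, and at each vertex `g`
there is exactly one arrow `g → g·a` and one arrow `g → g·b`, and no other arrows. -/
def GridQuiverOn (B : Submodule K H) (a b : H) (m n : ℤ) : Prop :=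
  grouplikeIn K H B a ∧ grouplikeIn K H B b ∧ a * b = b * a ∧
  a * inv' K H a = 1 ∧ inv' K H a * a = 1 ∧ b * inv' K H b = 1 ∧ inv' K H b * b = 1 ∧
  (∀ i j : ℤ, zp a (inv' K H a) i * zp b (inv' K H b) j = 1 ↔
      ∃ l : ℤ, i = l * m ∧ j = -(l * n)) ∧
  (∀ g : H, grouplikeIn K H B g ↔
      ∃ i j : ℤ, g = zp a (inv' K H a) i * zp b (inv' K H b) j) ∧
  (∀ g h : H, grouplikeIn K H B g → grouplikeIn K H B h →
      arrowsEq K H B g h (if h = g * a ∨ h = g * b then 1 else 0))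

/-- The Ext-quiver of `B` is a single vertex, and `G(B) = {1}`. -/
def SingleVertexQuiver (B : Submodule K H) : Prop :=
  (∀ g : H, grouplikeIn K H B g ↔ g = 1) ∧ arrowsEq K H B 1 1 0

/-- The Ext-quiver of `B` is a complete oriented cycle, and `G(B) = ⟨a | aⁿ = 1⟩`. -/
def CycleQuiver (B : Submodule K H) : Prop :=
  ∃ (a : H) (nn : ℕ), 0 < nn ∧ grouplikeIn K H B a ∧ a ^ nn = 1 ∧
    (∀ kk : ℕ, 0 < kk → kk < nn → a ^ kk ≠ 1) ∧
    (∀ g : H, grouplikeIn K H B g ↔ ∃ i : ℕ, g = a ^ i) ∧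
    (∀ g h : H, grouplikeIn K H B g → grouplikeIn K H B h →
      arrowsEq K H B g h (if h = g * a then 1 else 0))

/-- The Ext-quiver of `B` is the doubly infinite linear quiver `··· → · → · → ···`, and
`G(B) = ⟨a⟩` is infinite cyclic. -/
def LineQuiver (B : Submodule K H) : Prop :=
  ∃ a : H, grouplikeIn K H B a ∧ (∀ kk : ℕ, 0 < kk → a ^ kk ≠ 1) ∧
    (∀ g : H, grouplikeIn K H B g ↔ ∃ i j : ℕ, a ^ i * g = a ^ j) ∧
    (∀ g h : H, grouplikeIn K H B g → grouplikeIn K H B h →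
      arrowsEq K H B g h (if h = g * a then 1 else 0))

end Hopf

section Helpers

variable {K : Type} [Field K] {H : Type} [Ring H] [HopfAlgebra K H]

lemma isGrouplike_iff' {g : H} : IsGrouplike K H g ↔ IsGroupLikeElem K g :=
  ⟨fun h => ⟨h.1, h.2⟩, fun h => ⟨h.1, h.2⟩⟩

lemma IsGrouplike.mul' {a b : H} (ha : IsGrouplike K H a) (hb : IsGrouplike K H b) :
    IsGrouplike K H (a * b) :=
  isGrouplike_iff'.2 ((isGrouplike_iff'.1 ha).mul (isGrouplike_iff'.1 hb))

lemma IsGrouplike.invG {a : H} (ha : IsGrouplike K H a) : IsGrouplike K H (inv' K H a) :=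
  isGrouplike_iff'.2 (isGrouplike_iff'.1 ha).antipode

lemma IsGrouplike.mul_invG {a : H} (ha : IsGrouplike K H a) : a * inv' K H a = 1 :=
  (isGrouplike_iff'.1 ha).mul_antipode_cancel

lemma IsGrouplike.invG_mul {a : H} (ha : IsGrouplike K H a) : inv' K H a * a = 1 :=
  (isGrouplike_iff'.1 ha).antipode_mul_cancel

lemma inv'_eq_of {a b : H} (ha : IsGrouplike K H a) (h : a * b = 1) : inv' K H a = b :=
  left_inv_eq_right_inv ha.invG_mul h

lemma skewPrim_mul_mem {a x g h : H} (ha : IsGrouplike K H a) (hx : x ∈ skewPrim K H g h) :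
    a * x ∈ skewPrim K H (a * g) (a * h) := by
  rw [mem_skewPrim] at *
  rw [Bialgebra.comul_mul, hx, ha.2, mul_add, Algebra.TensorProduct.tmul_mul_tmul,
    Algebra.TensorProduct.tmul_mul_tmul]

/-- Left multiplication by a grouplike. -/
noncomputable def lmulEquiv {a : H} (ha : IsGrouplike K H a) : H ≃ₗ[K] H :=
  LinearEquiv.ofLinearMap (LinearMap.mulLeft K a) (LinearMap.mulLeft K (inv' K H a))
    (by ext x; simp [← mul_assoc, ha.mul_invG]) (by ext x; simp [← mul_assoc, ha.invG_mul])

lemma lmulEquiv_apply {a : H} (ha : IsGrouplike K H a) (x : H) : lmulEquiv ha x = a * x := rfl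

lemma map_skewPrim {a : H} (ha : IsGrouplike K H a) (g h : H) :
    (skewPrim K H g h).map (lmulEquiv ha : H →ₗ[K] H) = skewPrim K H (a * g) (a * h) := by
  apply le_antisymm
  · rintro _ ⟨x, hx, rfl⟩
    exact skewPrim_mul_mem ha hx
  · intro x hx
    refine ⟨inv' K H a * x, ?_, ?_⟩
    · have := skewPrim_mul_mem ha.invG hx
      simp only [← mul_assoc, ha.invG_mul, one_mul] at this
      exact this
    · show a * (inv' K H a * x) = x
      rw [← mul_assoc, ha.mul_invG, one_mul]

/-- Translation of skew primitives. -/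
noncomputable def skewEquiv {a : H} (ha : IsGrouplike K H a) (g h : H) :
    skewPrim K H g h ≃ₗ[K] skewPrim K H (a * g) (a * h) :=
  LinearEquiv.ofSubmodules (lmulEquiv ha) _ _ (map_skewPrim ha g h)

lemma skewEquiv_apply {a : H} (ha : IsGrouplike K H a) (g h : H) (x : skewPrim K H g h) :
    (skewEquiv ha g h x : H) = a * x := rfl

lemma ntRank_mul {a : H} (ha : IsGrouplike K H a) (g h : H) :
    ntRank K H (a * g) (a * h) = ntRank K H g h := by
  symm
  unfold ntRank
  refine (Submodule.Quotient.equiv _ _ (skewEquiv ha g h) ?_).rank_eq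
  ext y
  obtain ⟨x, rfl⟩ := (skewEquiv ha g h).surjective y
  rw [Submodule.mem_map_equiv, LinearEquiv.symm_apply_apply]
  simp only [Submodule.mem_comap, Submodule.subtype_apply, skewEquiv_apply,
    Submodule.mem_span_singleton, ← mul_sub, ← mul_smul_comm]
  refine exists_congr fun c => ⟨fun h => by rw [h], fun h => ?_⟩
  have h2 := congrArg (inv' K H a * ·) h
  simpa only [← mul_assoc, ha.invG_mul, one_mul] using h2

lemma rank_mul {a : H} (ha : IsGrouplike K H a) (g h : H) :
    Module.rank K (skewPrim K H (a * g) (a * h)) = Module.rank K (skewPrim K H g h) :=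
  (skewEquiv ha g h).rank_eq.symm

lemma card_sum_equiv {ι κ : Type} (e : ι ≃ κ) (f : ι → Cardinal.{0}) (f' : κ → Cardinal.{0})
    (h : ∀ i, f i = f' (e i)) : Cardinal.sum f = Cardinal.sum f' := by
  have : f = fun i => f' (e i) := funext h
  subst this
  exact Cardinal.mk_congr (Equiv.sigmaCongrLeft (β := fun k => (f' k).out) e)

/-- Left translation on the other vertices. -/
noncomputable def transEquiv {a : H} (ha : IsGrouplike K H a) (g g' : H) (hg : a * g = g') :
    {u : H // IsGrouplike K H u ∧ u ≠ g} ≃ {u : H // IsGrouplike K H u ∧ u ≠ g'} where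
  toFun u := ⟨a * u.1, ha.mul' u.2.1, fun h => u.2.2 ((lmulEquiv ha).injective (by
    rw [lmulEquiv_apply, lmulEquiv_apply, h, hg]))⟩
  invFun u := ⟨inv' K H a * u.1, ha.invG.mul' u.2.1, fun h => u.2.2 (by
    have h3 := congrArg (a * ·) h
    simp only [← mul_assoc, ha.mul_invG, one_mul] at h3
    exact h3.trans hg)⟩
  left_inv u := Subtype.ext (by simp [← mul_assoc, ha.invG_mul])
  right_inv u := Subtype.ext (by simp [← mul_assoc, ha.mul_invG])

lemma inv'_inv' {a : H} (ha : IsGrouplike K H a) : inv' K H (inv' K H a) = a :=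
  inv'_eq_of ha.invG ha.invG_mul

lemma inv'_one : inv' K H (1 : H) = 1 :=
  inv'_eq_of (isGrouplike_iff'.2 .one) (one_mul 1)

/-- Inversion on the nontrivial vertices. -/
noncomputable def invEquiv :
    {u : H // IsGrouplike K H u ∧ u ≠ 1} ≃ {u : H // IsGrouplike K H u ∧ u ≠ 1} where
  toFun u := ⟨inv' K H u.1, u.2.1.invG, fun h => u.2.2 (by
    rw [← inv'_inv' u.2.1, h, inv'_one])⟩
  invFun u := ⟨inv' K H u.1, u.2.1.invG, fun h => u.2.2 (by
    rw [← inv'_inv' u.2.1, h, inv'_one])⟩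
  left_inv u := Subtype.ext (inv'_inv' u.2.1)
  right_inv u := Subtype.ext (inv'_inv' u.2.1)

end Helpers

theorem star_quivers_isomorphic_and_homogeneous
    (K : Type) [Field K]
    (H : Type) [Ring H] [HopfAlgebra K H] (hpointed : IsPointedCoalgebra K H) :
    -- `Star(g) ≅ Star(h)` : translation by `h g⁻¹` matches the arrows at `g` with those
    -- at `h`
    (∀ g h u : H, IsGrouplike K H g → IsGrouplike K H h → IsGrouplike K H u →
      Module.rank K ↥(skewPrim K H g u) =
        Module.rank K ↥(skewPrim K H h (h * inv' K H g * u)) ∧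
      Module.rank K ↥(skewPrim K H u g) =
        Module.rank K ↥(skewPrim K H (h * inv' K H g * u) h)) ∧
    -- consequently the Ext-quiver is homogeneous
    (∃ n p : Cardinal, ∀ g : H, IsGrouplike K H g →
      Cardinal.sum
        (fun u : {u : H // IsGrouplike K H u ∧ u ≠ g} => ntRank K H g u.1) = n ∧
      Cardinal.sum
        (fun u : {u : H // IsGrouplike K H u ∧ u ≠ g} => ntRank K H u.1 g) = n ∧
      ntRank K H g g = p) := by
  refine ⟨fun g h u hg hh hu => ?_,
    Cardinal.sum (fun u : {u : H // IsGrouplike K H u ∧ u ≠ 1} => ntRank K H 1 u.1),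
    ntRank K H 1 1, fun g hg => ⟨?_, ?_, ?_⟩⟩
  · have ha := hh.mul' hg.invG
    have e : h * inv' K H g * g = h := by rw [mul_assoc, hg.invG_mul, mul_one]
    have h1 := rank_mul ha g u
    have h2 := rank_mul ha u g
    rw [e] at h1 h2
    exact ⟨h1.symm, h2.symm⟩
  · refine card_sum_equiv (transEquiv hg.invG g 1 hg.invG_mul) _ _ fun u => ?_
    have := ntRank_mul hg.invG g u.1
    rw [hg.invG_mul] at this
    exact this.symm
  · refine card_sum_equiv ((transEquiv hg.invG g 1 hg.invG_mul).trans invEquiv) _ _ fun u => ?_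
    have hv := hg.invG.mul' u.2.1
    have h1 := ntRank_mul hg.invG u.1 g
    have h2 := ntRank_mul hv.invG (inv' K H g * u.1) 1
    rw [hg.invG_mul] at h1
    rw [hv.invG_mul, mul_one] at h2
    exact h1.symm.trans h2.symm
  · have := ntRank_mul hg.invG g g
    rw [hg.invG_mul] at this
    exact this.symm
end

section
/- Let H be a pointed Hopf algebra of discrete corepresentation type over an algebraically closed field. If a and b are grouplike elements of H such that P(1,a) and P(1,b) each contain a nontrivial skew primitive element, then ab = ba. -/
open TensorProduct



section Helpers

variable {K : Type} [Field K] {H : Type}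

/-- coordinate map. -/
noncomputable def coordH (K : Type) [Field K] (H : Type) [AddCommGroup H] [Module K H] (n : ℕ)
    (i : Fin n) : (Fin n → K) ⊗[K] H →ₗ[K] H :=
  (TensorProduct.lid K H).toLinearMap ∘ₗ LinearMap.rTensor H (LinearMap.proj i)

lemma coordH_tmul [AddCommGroup H] [Module K H] {n : ℕ} (i : Fin n) (v : Fin n → K) (h : H) :
    coordH K H n i (v ⊗ₜ[K] h) = v i • h := by
  simp [coordH]

lemma eq_sum_coordH [AddCommGroup H] [Module K H] {n : ℕ} (t : (Fin n → K) ⊗[K] H) :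
    t = ∑ i, (Pi.single i (1 : K) : Fin n → K) ⊗ₜ[K] coordH K H n i t := by
  induction t with
  | zero => simp
  | add s t hs ht =>
    conv_lhs => rw [hs, ht]
    simp [TensorProduct.tmul_add, Finset.sum_add_distrib]
  | tmul v h =>
    simp only [coordH_tmul, ← TensorProduct.smul_tmul]
    rw [← TensorProduct.sum_tmul]
    congr 1
    ext j
    simp [Finset.sum_apply, Pi.single_apply]

lemma ext_coordH [AddCommGroup H] [Module K H] {n : ℕ} {s t : (Fin n → K) ⊗[K] H}
    (h : ∀ i, coordH K H n i s = coordH K H n i t) : s = t := by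
  rw [eq_sum_coordH s, eq_sum_coordH t]
  simp [h]

/-- vectors supported on the first `m` coordinates. -/
def firstSub (K : Type) [Field K] (n m : ℕ) : Submodule K (Fin n → K) where
  carrier := {v | ∀ j : Fin n, m ≤ j.val → v j = 0}
  add_mem' := by
    intro u v hu hv j hj
    simp [hu j hj, hv j hj]
  zero_mem' := by
    intro j hj
    rfl
  smul_mem' := by
    intro c v hv j hj
    simp [hv j hj]

lemma mem_firstSub {n m : ℕ} {v : Fin n → K} :
    v ∈ firstSub K n m ↔ ∀ j : Fin n, m ≤ j.val → v j = 0 := Iff.rfl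

lemma mem_range_of_coordH [AddCommGroup H] [Module K H] {n m : ℕ} (t : (Fin n → K) ⊗[K] H)
    (h : ∀ i : Fin n, m ≤ i.val → coordH K H n i t = 0) :
    t ∈ LinearMap.range (LinearMap.rTensor H (firstSub K n m).subtype) := by
  rw [eq_sum_coordH t]
  refine Submodule.sum_mem _ fun i _ => ?_
  by_cases hi : m ≤ i.val
  · rw [h i hi]; simp
  · have hm : (Pi.single i (1 : K) : Fin n → K) ∈ firstSub K n m := by
      intro j hj
      have : j ≠ i := by rintro rfl; exact hi hj
      simp [Pi.single_apply, this]
    exact ⟨(⟨_, hm⟩ : firstSub K n m) ⊗ₜ coordH K H n i t, by simp⟩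

/-- the coaction of a matrix. -/
noncomputable def matRho [AddCommGroup H] [Module K H] {n : ℕ} (C : Fin n → Fin n → H) :
    (Fin n → K) →ₗ[K] (Fin n → K) ⊗[K] H :=
  ∑ j, ∑ i, (TensorProduct.mk K (Fin n → K) H).flip (C i j) ∘ₗ
    (LinearMap.single K (fun _ : Fin n => K) i) ∘ₗ LinearMap.proj j

lemma matRho_apply [AddCommGroup H] [Module K H] {n : ℕ} (C : Fin n → Fin n → H)
    (v : Fin n → K) :
    matRho C v = ∑ j, ∑ i, (Pi.single i (v j) : Fin n → K) ⊗ₜ[K] C i j := by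
  simp [matRho]

lemma matRho_single [AddCommGroup H] [Module K H] {n : ℕ} (C : Fin n → Fin n → H)
    (k : Fin n) (c : K) :
    matRho C (Pi.single k c) = ∑ i, (Pi.single i c : Fin n → K) ⊗ₜ[K] C i k := by
  rw [matRho_apply, Finset.sum_eq_single k]
  · simp
  · intro j _ hj
    simp [Pi.single_apply, hj]
  · simp

lemma coordH_matRho [AddCommGroup H] [Module K H] {n : ℕ} (C : Fin n → Fin n → H)
    (v : Fin n → K) (l : Fin n) :
    coordH K H n l (matRho C v) = ∑ j, v j • C l j := by
  rw [matRho_apply]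
  simp only [map_sum, coordH_tmul]
  refine Finset.sum_congr rfl fun j _ => ?_
  rw [Finset.sum_eq_single l]
  · simp
  · intro i _ hi
    simp [Pi.single_apply, hi.symm]
  · simp

/-- the comodule of a multiplicative matrix. -/
noncomputable def matComod [AddCommGroup H] [Module K H] [Coalgebra K H] {n : ℕ}
    (C : Fin n → Fin n → H)
    (hε : ∀ i j, Coalgebra.counit (R := K) (C i j) = if i = j then 1 else 0)
    (hΔ : ∀ i j, Coalgebra.comul (R := K) (C i j) = ∑ k, C i k ⊗ₜ[K] C k j) : Comod K H where
  carrier := Fin n → K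
  ρ := matRho C
  counit_comp := by
    intro m
    rw [matRho_apply]
    ext l
    simp only [map_sum, LinearMap.lTensor_tmul, TensorProduct.rid_tmul, hε]
    simp [Finset.sum_apply, Pi.single_apply]
  coassoc := by
    intro m
    rw [matRho_apply]
    simp only [map_sum, LinearMap.lTensor_tmul, LinearMap.rTensor_tmul, hΔ, matRho_single,
      TensorProduct.tmul_sum, TensorProduct.sum_tmul, TensorProduct.assoc_tmul]
    refine Finset.sum_congr rfl fun j _ => ?_
    exact Finset.sum_comm

lemma single_ne_aux : (Pi.single 0 1 : Fin 4 → K) ≠ 0 := by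
  intro h
  have := congrFun h 0
  simp at this

lemma firstSub_succ {n : ℕ} (i : Fin n) :
    firstSub K n i.succ.val
      = firstSub K n i.castSucc.val ⊔ Submodule.span K {(Pi.single i 1 : Fin n → K)} := by
  apply le_antisymm
  · intro v hv
    refine Submodule.mem_sup.2 ⟨v - Pi.single i (v i), ?_, Pi.single i (v i), ?_, ?_⟩
    · intro j hj
      by_cases hji : j = i
      · subst hji; simp
      · have h1 : v j = 0 := hv j (by
          have : j.val ≠ i.val := fun h => hji (Fin.ext h)
          simp at hj ⊢; omega)
        simp [hji, h1]
    · refine Submodule.mem_span_singleton.2 ⟨v i, ?_⟩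
      ext j
      simp [Pi.single_apply]
    · exact sub_add_cancel _ _
  · refine sup_le ?_ ?_
    · intro v hv j hj
      exact hv j (by simp at hj ⊢; omega)
    · refine (Submodule.span_singleton_le_iff_mem _ _).2 ?_
      intro j hj
      have : j ≠ i := by rintro rfl; simp at hj
      simp [this]

lemma matComod_dim [AddCommGroup H] [Module K H] [Coalgebra K H] {n : ℕ}
    (C : Fin n → Fin n → H)
    (hε : ∀ i j, Coalgebra.counit (R := K) (C i j) = if i = j then 1 else 0)
    (hΔ : ∀ i j, Coalgebra.comul (R := K) (C i j) = ∑ k, C i k ⊗ₜ[K] C k j)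
    (hU : ∀ i j, j < i → C i j = 0) (hg : ∀ i, IsGrouplike K H (C i i)) :
    HasDimVector K H (matComod C hε hΔ) (fun h => Nat.card {i : Fin n // C i i = h}) := by
  refine ⟨n, fun i => firstSub K n i.val, fun i => C i i, ?_, ?_, ?_, ?_, hg, ?_, ?_,
    fun _ => rfl⟩
  · refine (Submodule.eq_bot_iff _).2 fun v hv => ?_
    exact funext fun j => hv j (Nat.zero_le _)
  · refine Submodule.eq_top_iff'.2 fun v j hj => ?_
    have := j.2
    simp at hj
    omega
  · intro i v hv j hj
    refine hv j ?_
    simp at hj ⊢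
    omega
  · intro i v hv
    refine mem_range_of_coordH _ fun l hl => ?_
    refine (coordH_matRho C v l).trans (Finset.sum_eq_zero fun j _ => ?_)
    by_cases hj : i.val ≤ j.val
    · rw [hv j hj]; simp
    · rw [hU l j (by rw [Fin.lt_def]; omega)]; simp
  · intro i
    refine ⟨(Pi.single i 1 : Fin n → K), ?_, ?_, ?_⟩
    · intro j hj
      have : j ≠ i := by rintro rfl; simp at hj
      simp [Pi.single_apply, this]
    · intro h
      have := h i (by simp)
      simp at this
    · exact firstSub_succ i
  · intro i v hv
    refine mem_range_of_coordH _ fun l hl => ?_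
    change Fin n → K at v
    show coordH K H n l (matRho C v - v ⊗ₜ[K] C i i) = 0
    rw [map_sub, coordH_matRho, coordH_tmul]
    rw [sub_eq_zero]
    rw [Finset.sum_eq_single l]
    · by_cases hli : l = i
      · rw [hli]
      · have h1 : v l = 0 := hv l (by
          have : l.val ≠ i.val := fun h => hli (Fin.ext h)
          simp at hl ⊢; omega)
        simp [h1]
    · intro j _ hj
      by_cases hlt : j < l
      · rw [hU l j hlt]; simp
      · have h1 : v j = 0 := hv j (by
          have : j.val ≠ l.val := fun h => hj (Fin.ext h)
          rw [Fin.lt_def] at hlt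
          simp at hl ⊢; omega)
        simp [h1]
    · simp

lemma matComod_hom [AddCommGroup H] [Module K H] [Coalgebra K H] {n : ℕ}
    (C D : Fin n → Fin n → H) (f : (Fin n → K) →ₗ[K] (Fin n → K))
    (hf : ∀ m, matRho D (f m) = LinearMap.rTensor H f (matRho C m)) (i j : Fin n) :
    ∑ k, f (Pi.single j 1) k • D i k = ∑ k, f (Pi.single k 1) i • C k j := by
  have h := congrArg (coordH K H n i) (hf (Pi.single j 1))
  rw [coordH_matRho, matRho_single] at h
  rw [h]
  simp [map_sum, coordH_tmul]

lemma comodIso_trans_symm [AddCommGroup H] [Module K H] [Coalgebra K H] {M N R : Comod K H}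
    (h1 : ComodIso K H M R) (h2 : ComodIso K H N R) : ComodIso K H M N := by
  obtain ⟨f, hf⟩ := h1
  obtain ⟨g, hg⟩ := h2
  let e := LinearEquiv.ofBijective g.toLin hg
  have he : ∀ z, g.toLin (e.symm z) = z := fun z => e.apply_symm_apply z
  have he' : e.symm.toLinearMap ∘ₗ g.toLin = LinearMap.id := by
    ext z; exact e.symm_apply_apply z
  refine ⟨⟨e.symm.toLinearMap ∘ₗ f.toLin, fun m => ?_⟩, e.symm.bijective.comp hf⟩
  have h := g.compat (e.symm (f.toLin m))
  rw [he, f.compat] at h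
  have h' := congrArg (LinearMap.rTensor H e.symm.toLinearMap) h
  rw [← LinearMap.rTensor_comp_apply, ← LinearMap.rTensor_comp_apply, he'] at h'
  simpa using h'.symm

/-- The matrix. -/
def theMat [Ring H] [HopfAlgebra K H] (a b x y : H) (c : K) : Fin 4 → Fin 4 → H :=
  ![![a, 0, a * y, c • (y * a)], ![0, b, x * b, b * x], ![0, 0, a * b, 0], ![0, 0, 0, b * a]]

lemma counit_of_skew [Ring H] [HopfAlgebra K H] {a x : H} (ha : IsGrouplike K H a)
    (hx : x ∈ skewPrim K H 1 a) : Coalgebra.counit (R := K) x = 0 := by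
  rw [mem_skewPrim] at hx
  have h := Coalgebra.rTensor_counit_comul (R := K) x
  rw [hx] at h
  simp only [map_add, LinearMap.rTensor_tmul, Bialgebra.counit_one] at h
  have h' := congrArg (fun t => Coalgebra.counit (R := K) (TensorProduct.lid K H t)) h
  simpa [ha.1] using h'

lemma theMat_counit [Ring H] [HopfAlgebra K H] {a b x y : H} (c : K) (ha : IsGrouplike K H a)
    (hb : IsGrouplike K H b) (hx : x ∈ skewPrim K H 1 a) (hy : y ∈ skewPrim K H 1 b) (i j) :
    Coalgebra.counit (R := K) (theMat a b x y c i j) = if i = j then 1 else 0 := by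
  have h1 := counit_of_skew ha hx
  have h2 := counit_of_skew hb hy
  fin_cases i <;> fin_cases j <;> simp [theMat, ha.1, hb.1, h1, h2, Bialgebra.counit_mul]

lemma theMat_comul [Ring H] [HopfAlgebra K H] {a b x y : H} (c : K) (ha : IsGrouplike K H a)
    (hb : IsGrouplike K H b) (hx : x ∈ skewPrim K H 1 a) (hy : y ∈ skewPrim K H 1 b) (i j) :
    Coalgebra.comul (R := K) (theMat a b x y c i j) =
      ∑ k, theMat a b x y c i k ⊗ₜ[K] theMat a b x y c k j := by
  rw [mem_skewPrim] at hx hy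
  fin_cases i <;> fin_cases j <;>
    simp [theMat, ha.2, hb.2, hx, hy, Bialgebra.comul_mul, Fin.sum_univ_four, mul_add, add_mul,
      Algebra.TensorProduct.tmul_mul_tmul, TensorProduct.smul_tmul']

lemma theMat_upper [Ring H] [HopfAlgebra K H] {a b x y : H} (c : K) (i j : Fin 4) (h : j < i) :
    theMat a b x y c i j = 0 := by
  fin_cases i <;> fin_cases j <;> first | rfl | (exfalso; revert h; decide)

lemma IsGrouplike.hmul [Ring H] [HopfAlgebra K H] {a b : H} (ha : IsGrouplike K H a)
    (hb : IsGrouplike K H b) : IsGrouplike K H (a * b) := by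
  constructor
  · simp [ha.1, hb.1]
  · simp [Bialgebra.comul_mul, ha.2, hb.2]

lemma theMat_diag [Ring H] [HopfAlgebra K H] {a b x y : H} (c : K) (ha : IsGrouplike K H a)
    (hb : IsGrouplike K H b) (i : Fin 4) : IsGrouplike K H (theMat a b x y c i i) := by
  fin_cases i
  · exact ha
  · exact hb
  · exact ha.hmul hb
  · exact hb.hmul ha

lemma IsGrouplike.unit [Ring H] [HopfAlgebra K H] {a : H} (ha : IsGrouplike K H a) :
    IsUnit a := by
  have h1 := HopfAlgebra.mul_antipode_rTensor_comul_apply (R := K) a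
  have h2 := HopfAlgebra.mul_antipode_lTensor_comul_apply (R := K) a
  rw [ha.2] at h1 h2
  simp [ha.1] at h1 h2
  exact ⟨⟨a, HopfAlgebra.antipode K a, h2, h1⟩, rfl⟩

/-- key linear algebra: `p g + r z = p g' + s z`. -/
lemma key_lin [Ring H] [Algebra K H] {b y : H} {p r s : K}
    (hy' : y ∉ Submodule.span K {(1 : H) - b}) (hb : b ≠ 1)
    (h : p • (1 : H) + r • y = p • b + s • y) : r = s ∧ p = 0 := by
  have h1 : (s - r) • y = p • ((1 : H) - b) := by
    rw [sub_smul, smul_sub, sub_eq_sub_iff_add_eq_add, add_comm (s • y), ← h]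
  have hrs : r = s := by
    by_contra hne
    have hne' : s - r ≠ 0 := sub_ne_zero.2 (Ne.symm hne)
    apply hy'
    refine Submodule.mem_span_singleton.2 ⟨(s - r)⁻¹ * p, ?_⟩
    rw [mul_smul, ← h1, smul_smul, inv_mul_cancel₀ hne', one_smul]
  refine ⟨hrs, ?_⟩
  subst hrs
  rw [sub_self, zero_smul] at h1
  rcases smul_eq_zero.1 h1.symm with h2 | h2
  · exact h2
  · exact absurd (sub_eq_zero.1 h2).symm hb

lemma smul_cancel_ne [AddCommGroup H] [Module K H] {g h : H} (hgh : g ≠ h) {p : K}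
    (e : p • g = p • h) : p = 0 := by
  by_contra hp
  exact hgh (smul_right_injective H hp e)

lemma theMat_hom [Ring H] [HopfAlgebra K H] {a b x y : H} (c d : K) (ha : IsGrouplike K H a)
    (hb : IsGrouplike K H b)
    (hx' : x ∉ Submodule.span K {(1 : H) - a}) (hy' : y ∉ Submodule.span K {(1 : H) - b})
    (hab : a * b ≠ b * a) (f : (Fin 4 → K) →ₗ[K] (Fin 4 → K))
    (hf : ∀ m, matRho (theMat a b x y d) (f m)
      = LinearMap.rTensor H f (matRho (theMat a b x y c) m)) :
    ∃ r : K, f = r • LinearMap.id ∧ r * c = r * d := by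
  have E := matComod_hom _ _ f hf
  have ua := ha.unit
  have ub := hb.unit
  have a1 : a ≠ 1 := by rintro rfl; simp at hab
  have b1 : b ≠ 1 := by rintro rfl; simp at hab
  have n1 : a ≠ b := by rintro rfl; exact hab rfl
  have n2 : a * b ≠ a := fun h => b1 (ua.mul_left_cancel (by simpa using h))
  have n3 : a * b ≠ b := fun h => a1 (ub.mul_right_cancel (by simpa using h))
  have n4 : b * a ≠ a := fun h => b1 (ua.mul_right_cancel (by simpa using h))
  have n5 : b * a ≠ b := fun h => a1 (ub.mul_left_cancel (by simpa using h))
  generalize hA : (fun i j => f (Pi.single j 1) i) = A at E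
  have hA' : ∀ i j, f (Pi.single j 1) i = A i j := fun i j => by rw [← hA]
  simp only [hA'] at E
  simp only [Fin.sum_univ_four] at E
  have e20 := E 2 0
  have e30 := E 3 0
  have e10 := E 1 0
  have e21 := E 2 1
  have e31 := E 3 1
  have e01 := E 0 1
  have e32 := E 3 2
  have e02 := E 0 2
  have e12 := E 1 2
  have e23 := E 2 3
  have e03 := E 0 3
  have e13 := E 1 3
  simp [theMat] at e20 e30 e10 e21 e31 e01 e32 e02 e12 e23 e03 e13
  have z20 := smul_cancel_ne n2 e20
  have z30 := smul_cancel_ne n4 e30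
  have z21 := smul_cancel_ne n3 e21
  have z31 := smul_cancel_ne n5 e31
  simp only [z20, z30, z21, z31, zero_smul, add_zero, zero_add] at e10 e01 e32 e23
  have z10 := smul_cancel_ne n1.symm e10
  have z01 := smul_cancel_ne n1 e01
  have z32 := smul_cancel_ne hab.symm e32
  have z23 := smul_cancel_ne hab e23
  simp only [z10, z01, z32, z23, zero_smul, add_zero, zero_add] at e02 e12 e03 e13
  obtain ⟨k1, z02⟩ := key_lin (p := A 0 2) (r := A 2 2) (s := A 0 0) hy' b1
    (ua.mul_left_cancel (by simpa [mul_add, add_comm] using e02))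
  obtain ⟨k2, z12⟩ := key_lin (p := A 1 2) (r := A 2 2) (s := A 1 1) hx' a1
    (ub.mul_right_cancel (by simpa [add_mul, add_comm] using e12))
  obtain ⟨k3, z03⟩ := key_lin (p := A 0 3) (r := A 3 3 * d) (s := A 0 0 * c) hy' b1
    (ua.mul_right_cancel (by simpa [add_mul, add_comm, mul_smul] using e03))
  obtain ⟨k4, z13⟩ := key_lin (p := A 1 3) (r := A 3 3) (s := A 1 1) hx' a1
    (ub.mul_left_cancel (by simpa [mul_add, add_comm] using e13))
  have q1 : A 1 1 = A 0 0 := by rw [← k2, k1]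
  have q3 : A 3 3 = A 0 0 := by rw [k4, q1]
  refine ⟨A 0 0, ?_, by rw [← k3, q3]⟩
  refine LinearMap.pi_ext' fun j => LinearMap.ext_ring ?_
  ext i
  simp only [LinearMap.comp_apply, LinearMap.single_apply, hA', LinearMap.smul_apply,
    LinearMap.id_apply, Pi.smul_apply, smul_eq_mul]
  fin_cases i <;> fin_cases j <;>
    simp [z20, z30, z21, z31, z10, z01, z32, z23, z02, z12, z03, z13, k1, q1, q3]

end Helpers

theorem grouplikes_commute_of_nontrivial_skewPrim
    (K : Type) [Field K] [IsAlgClosed K]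
    (H : Type) [Ring H] [HopfAlgebra K H]
    (hpointed : IsPointedCoalgebra K H) (hdiscrete : DiscreteCorepType K H)
    (a b : H) (ha : IsGrouplike K H a) (hb : IsGrouplike K H b)
    (x y : H)
    (hx : x ∈ skewPrim K H 1 a) (hx' : x ∉ Submodule.span K {(1 : H) - a})
    (hy : y ∈ skewPrim K H 1 b) (hy' : y ∉ Submodule.span K {(1 : H) - b}) :
    a * b = b * a := by
  by_contra hab
  obtain ⟨N, R, hR⟩ := hdiscrete
    (fun h => Nat.card {i : Fin 4 // theMat a b x y (0 : K) i i = h})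
  let M : K → Comod K H := fun c => matComod (theMat a b x y c)
    (theMat_counit c ha hb hx hy) (theMat_comul c ha hb hx hy)
  have hM : ∀ c, ∃ i, ComodIso K H (M c) (R i) := by
    intro c
    refine hR (M c) ⟨⟨(Pi.single 0 1 : Fin 4 → K), ?_⟩, ?_⟩ ?_
    · exact single_ne_aux
    · rintro ⟨f, hf⟩ hff
      obtain ⟨r, hr, -⟩ := theMat_hom c c ha hb hx' hy' hab f hf
      change f ∘ₗ f = f at hff
      change f = 0 ∨ f = LinearMap.id
      have h1 : r * r = r := by
        have := congrFun (LinearMap.congr_fun hff (Pi.single 0 1 : Fin 4 → K)) 0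
        rw [hr] at this
        change r * (r * (Pi.single 0 1 : Fin 4 → K) 0) = r * (Pi.single 0 1 : Fin 4 → K) 0 at this
        simpa using this
      have h1' : r = 0 ∨ r = 1 := by
        by_cases h0 : r = 0
        · exact Or.inl h0
        · exact Or.inr (mul_left_cancel₀ h0 (by rw [h1, mul_one]))
      rcases h1' with h | h
      · left; rw [hr, h, zero_smul]; rfl
      · right; rw [hr, h, one_smul]; rfl
    · have h := matComod_dim (theMat a b x y c)
        (theMat_counit c ha hb hx hy) (theMat_comul c ha hb hx hy)
        (theMat_upper c) (theMat_diag c ha hb)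
      have h2 : ∀ i : Fin 4, theMat a b x y c i i = theMat a b x y (0 : K) i i := by
        intro i; fin_cases i <;> rfl
      simp only [h2] at h
      exact h
  choose i hi using hM
  obtain ⟨c, d, hcd, he⟩ := Finite.exists_ne_map_eq_of_infinite i
  have h2 := hi d
  rw [← he] at h2
  obtain ⟨⟨f, hf⟩, hbij⟩ := comodIso_trans_symm (hi c) h2
  obtain ⟨r, hr, hrc⟩ := theMat_hom c d ha hb hx' hy' hab f hf
  by_cases h0 : r = 0
  · rw [h0, zero_smul] at hr
    have hbi : Function.Injective f := hbij.1
    have := @hbi (Pi.single 0 1) 0 (by rw [hr]; rfl)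
    exact single_ne_aux this
  · exact hcd (mul_left_cancel₀ h0 hrc)
end

section
/- Let H be a pointed Hopf algebra of discrete corepresentation type over an algebraically closed field and let Q be the Ext-quiver of the category of right H-comodules. Then at each vertex of Q there are at most 2 outgoing arrows and at most 2 incoming arrows. (In particular, Q is Schurian: there is at most one arrow between any two vertices.) -/
open TensorProduct



open scoped Classical

section Aux

set_option linter.unusedSectionVars false
set_option linter.unusedSimpArgs false

variable {K : Type} [Field K] {H : Type} [AddCommGroup H] [Module K H] [Coalgebra K H]
variable {ι : Type} [Fintype ι] [DecidableEq ι]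

noncomputable def rhoOf (K : Type) [Field K] {H : Type} [AddCommGroup H] [Module K H]
    {ι : Type} [Fintype ι] [DecidableEq ι] (X : ι → ι → H) :
    (ι → K) →ₗ[K] (ι → K) ⊗[K] H :=
  ∑ j, (LinearMap.proj (R := K) (φ := fun _ : ι => K) j).smulRight
    (∑ i, (Pi.single i (1 : K) : ι → K) ⊗ₜ[K] X i j)

lemma rhoOf_apply (X : ι → ι → H) (v : ι → K) :
    rhoOf K X v = ∑ j, v j • ∑ i, (Pi.single i (1 : K) : ι → K) ⊗ₜ[K] X i j := by
  simp [rhoOf]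

lemma rhoOf_single (X : ι → ι → H) (j : ι) :
    rhoOf K X (Pi.single j 1) = ∑ i, (Pi.single i (1 : K) : ι → K) ⊗ₜ[K] X i j := by
  rw [rhoOf_apply, Finset.sum_eq_single j]
  · simp
  · intro b _ hb; simp [hb]
  · simp

noncomputable def coef (K : Type) [Field K] (H : Type) [AddCommGroup H] [Module K H]
    {ι : Type} (i : ι) : (ι → K) ⊗[K] H →ₗ[K] H :=
  (TensorProduct.lid K H).toLinearMap ∘ₗ
    LinearMap.rTensor H (LinearMap.proj (R := K) (φ := fun _ : ι => K) i)

lemma coef_tmul (i : ι) (v : ι → K) (h : H) : coef K H i (v ⊗ₜ h) = v i • h := by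
  simp [coef]

structure IsComatrix (K : Type) [Field K] {H : Type} [AddCommGroup H] [Module K H]
    [Coalgebra K H] {ι : Type} [Fintype ι] [DecidableEq ι] (X : ι → ι → H) : Prop where
  counit : ∀ i j, Coalgebra.counit (R := K) (X i j) = if i = j then 1 else 0
  comul : ∀ i j, Coalgebra.comul (R := K) (X i j) = ∑ k, X i k ⊗ₜ[K] X k j

noncomputable def comodOf (X : ι → ι → H) (hX : IsComatrix K X) : Comod K H where
  carrier := ι → K
  ρ := rhoOf K X
  counit_comp := by
    intro m
    have : ((TensorProduct.rid K (ι → K)).toLinearMap ∘ₗ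
      (LinearMap.lTensor (ι → K) (Coalgebra.counit (R := K) (A := H))) ∘ₗ rhoOf K X)
        = LinearMap.id := by
      refine (Pi.basisFun K ι).ext fun j => ?_
      simp only [Pi.basisFun_apply, LinearMap.comp_apply, rhoOf_single, map_sum,
        LinearMap.lTensor_tmul, hX.counit, LinearEquiv.coe_coe, TensorProduct.rid_tmul,
        LinearMap.id_apply]
      simp
    exact congrArg (fun f => f m) this
  coassoc := by
    intro m
    have : ((LinearMap.lTensor (ι → K) (Coalgebra.comul (R := K) (A := H))) ∘ₗ rhoOf K X)
        = (TensorProduct.assoc K (ι → K) H H).toLinearMap ∘ₗ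
          (LinearMap.rTensor H (rhoOf K X)) ∘ₗ rhoOf K X := by
      refine (Pi.basisFun K ι).ext fun j => ?_
      simp only [Pi.basisFun_apply, LinearMap.comp_apply, rhoOf_single, map_sum,
        LinearMap.lTensor_tmul, hX.comul, LinearMap.rTensor_tmul, LinearEquiv.coe_coe,
        TensorProduct.sum_tmul, TensorProduct.tmul_sum, TensorProduct.assoc_tmul]
      rw [Finset.sum_comm]
    exact congrArg (fun f => f m) this

lemma hom_eq (X X' : ι → ι → H) (hX : IsComatrix K X) (hX' : IsComatrix K X')
    (f : ComodHom K H (comodOf X hX) (comodOf X' hX')) (P : Matrix ι ι K)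
    (hP : f.toLin = Matrix.toLin' P) (i j : ι) :
    ∑ k, P k j • X' i k = ∑ k, P i k • X k j := by
  have h := f.compat (Pi.single j 1 : ι → K)
  rw [hP] at h
  change rhoOf K X' (Matrix.toLin' P (Pi.single j 1)) =
    LinearMap.rTensor H (Matrix.toLin' P) (rhoOf K X (Pi.single j 1)) at h
  rw [rhoOf_single, rhoOf_apply] at h
  have h2 := congrArg (coef K H i) h
  simpa only [map_sum, map_smul, LinearMap.rTensor_tmul, coef_tmul, Matrix.toLin'_apply,
    Matrix.mulVec_single_one, Matrix.col_apply, Pi.single_apply, ite_smul, one_smul, zero_smul,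
    Finset.sum_ite_eq, Finset.mem_univ, if_true] using h2

lemma iso_hom {M N R : Comod K H} (h1 : ComodIso K H M R) (h2 : ComodIso K H N R) :
    ComodIso K H M N := by
  obtain ⟨f, hf⟩ := h1
  obtain ⟨g, hg⟩ := h2
  let e := LinearEquiv.ofBijective g.toLin hg
  have he : ∀ x, g.toLin (e.symm x) = x := fun x => e.apply_symm_apply x
  have he2 : e.symm.toLinearMap ∘ₗ g.toLin = LinearMap.id := by
    ext x; exact e.symm_apply_apply x
  refine ⟨⟨e.symm.toLinearMap ∘ₗ f.toLin, fun m => ?_⟩, ?_⟩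
  · have h3 := g.compat (e.symm (f.toLin m))
    rw [he, f.compat] at h3
    have h4 := congrArg (LinearMap.rTensor H e.symm.toLinearMap) h3
    rw [← LinearMap.rTensor_comp_apply, ← LinearMap.rTensor_comp_apply, he2,
      LinearMap.rTensor_id] at h4
    exact h4.symm
  · exact e.symm.bijective.comp hf

lemma hasDim (X : ι → ι → H) (hX : IsComatrix K X) (n : ℕ) (e : Fin n ≃ ι) (γ : ι → H)
    (hg : ∀ i, X i i = γ i) (hγ : ∀ i, IsGrouplike K H (γ i))
    (htri : ∀ k l : Fin n, l < k → X (e k) (e l) = 0) :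
    HasDimVector K H (comodOf X hX) (fun h => Nat.card {i : Fin n // γ (e i) = h}) := by
  let F : ℕ → Submodule K (ι → K) := fun i =>
    { carrier := {v | ∀ k : Fin n, i ≤ k.1 → v (e k) = 0}
      add_mem' := by intro a b ha hb k hk; simp [ha k hk, hb k hk]
      zero_mem' := by intro k hk; rfl
      smul_mem' := by intro c a ha k hk; simp [ha k hk] }
  have hF : ∀ i v, v ∈ F i ↔ ∀ k : Fin n, i ≤ k.1 → v (e k) = 0 := fun _ _ => Iff.rfl
  have hs : ∀ (i : ℕ) (k : Fin n), k.1 < i → (Pi.single (e k) 1 : ι → K) ∈ F i := by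
    intro i k hk l hl
    have : k ≠ l := by rintro rfl; omega
    simp [Pi.single_apply, this.symm]
  have hR : ∀ (i : ℕ) (v : ι → K) (h : H), v ∈ F i →
      v ⊗ₜ[K] h ∈ LinearMap.range (LinearMap.rTensor H (F i).subtype) :=
    fun i v h hv => ⟨(⟨v, hv⟩ : F i) ⊗ₜ h, by simp⟩
  have hsub : ∀ i : ℕ, ∀ v ∈ F i,
      rhoOf K X v ∈ LinearMap.range (LinearMap.rTensor H (F i).subtype) := by
    intro i v hv
    rw [rhoOf_apply, ← e.sum_comp]
    refine Submodule.sum_mem _ fun l _ => ?_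
    by_cases hl : i ≤ l.1
    · rw [hv l hl, zero_smul]; exact Submodule.zero_mem _
    refine Submodule.smul_mem _ _ ?_
    rw [← e.sum_comp]
    refine Submodule.sum_mem _ fun k _ => ?_
    by_cases hk : l < k
    · rw [htri k l hk, TensorProduct.tmul_zero]; exact Submodule.zero_mem _
    · exact hR _ _ _ (hs _ _ (by have := not_lt.1 hk; have : k.1 ≤ l.1 := this; omega))
  refine ⟨n, fun i => F i.1, fun i => γ (e i), ?_, ?_, ?_, fun i => hsub i.1, fun i => hγ _,
    ?_, ?_, fun h => rfl⟩
  · change F 0 = ⊥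
    rw [eq_bot_iff]
    intro v hv
    have : v = 0 := by
      ext i
      simpa using hv (e.symm i) (Nat.zero_le _)
    exact this
  · change F n = ⊤
    rw [eq_top_iff]
    intro v _ k hk
    have := k.2
    omega
  · intro i v hv k hk
    exact hv k (by simp at hk ⊢; omega)
  · intro i
    refine ⟨(Pi.single (e i) 1 : ι → K), hs _ _ (by simp), ?_, ?_⟩
    · intro h
      have := h i (by simp)
      simp at this
    · change F (i.1 + 1) = F i.1 ⊔ Submodule.span K {(Pi.single (e i) 1 : ι → K)}
      apply le_antisymm
      · intro v hv
        refine Submodule.mem_sup.2 ⟨v - v (e i) • (Pi.single (e i) 1 : ι → K), ?_,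
          v (e i) • (Pi.single (e i) 1 : ι → K),
          Submodule.smul_mem _ _ (Submodule.mem_span_singleton_self _), by simp⟩
        intro k hk
        by_cases hki : k = i
        · subst hki; simp
        · have : v (e k) = 0 := hv k (by
            have : k.1 ≠ i.1 := fun h => hki (Fin.ext h)
            omega)
          simp [this, Pi.single_apply, hki]
      · refine sup_le ?_ ?_
        · intro v hv k hk
          exact hv k (by omega)
        · rw [Submodule.span_singleton_le_iff_mem]
          exact hs _ _ (by omega)
  · intro i (v : ι → K) hv
    change rhoOf K X v - v ⊗ₜ[K] γ (e i) ∈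
      LinearMap.range (LinearMap.rTensor H (F i.1).subtype)
    have hv' : v = (v - v (e i) • (Pi.single (e i) 1 : ι → K))
      + v (e i) • (Pi.single (e i) 1 : ι → K) := by simp
    have hw : v - v (e i) • (Pi.single (e i) 1 : ι → K) ∈ F i.1 := by
      intro k hk
      by_cases hki : k = i
      · subst hki; simp
      · have : v (e k) = 0 := hv k (by
          have : k.1 ≠ i.1 := fun h => hki (Fin.ext h)
          simp; omega)
        simp [this, Pi.single_apply, hki]
    generalize v - v (e i) • (Pi.single (e i) 1 : ι → K) = w at hv' hw
    generalize v (e i) = c at hv'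
    subst hv'
    have : rhoOf K X (w + c • (Pi.single (e i) 1 : ι → K)) -
        (w + c • (Pi.single (e i) 1 : ι → K)) ⊗ₜ[K] γ (e i) =
        (rhoOf K X w - w ⊗ₜ[K] γ (e i)) + c • (rhoOf K X (Pi.single (e i) 1) -
          (Pi.single (e i) 1 : ι → K) ⊗ₜ[K] γ (e i)) := by
      rw [map_add, map_smul, TensorProduct.add_tmul, smul_sub, TensorProduct.smul_tmul']
      abel
    rw [this]
    refine Submodule.add_mem _ (Submodule.sub_mem _ (hsub _ _ hw) (hR _ _ _ hw))
      (Submodule.smul_mem _ _ ?_)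
    rw [rhoOf_single, ← Finset.add_sum_erase _ _ (Finset.mem_univ (e i)), hg,
      add_sub_cancel_left]
    refine Submodule.sum_mem _ fun k' hk' => ?_
    obtain ⟨k, rfl⟩ := e.surjective k'
    have hne : k ≠ i := by rintro rfl; simp at hk'
    by_cases hk : i < k
    · rw [htri k i hk, TensorProduct.tmul_zero]; exact Submodule.zero_mem _
    · exact hR _ _ _ (hs _ _ (Fin.lt_def.1 (lt_of_le_of_ne (not_lt.1 hk) hne)))

lemma skew_counit {g h x : H} (hg : IsGrouplike K H g) (hh : IsGrouplike K H h)
    (hx : x ∈ skewPrim K H g h) : Coalgebra.counit (R := K) x = 0 := by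
  rw [mem_skewPrim] at hx
  have h1 := Coalgebra.rTensor_counit_comul (R := K) x
  rw [hx, map_add, LinearMap.rTensor_tmul, LinearMap.rTensor_tmul, hg.1] at h1
  have h2 := congrArg (fun z => Coalgebra.counit (R := K) (TensorProduct.lid K H z)) h1
  simpa [hh.1] using h2

def blockX {a b : ℕ} (s : Fin a → H) (t : Fin b → H) (x : Fin a → Fin b → H) :
    Fin a ⊕ Fin b → Fin a ⊕ Fin b → H
  | .inl i, .inl j => if i = j then s i else 0
  | .inl i, .inr j => x i j
  | .inr _, .inl _ => 0
  | .inr i, .inr j => if i = j then t i else 0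

lemma blockX_comatrix {a b : ℕ} (s : Fin a → H) (t : Fin b → H) (x : Fin a → Fin b → H)
    (hs : ∀ i, IsGrouplike K H (s i)) (ht : ∀ i, IsGrouplike K H (t i))
    (hx : ∀ i j, x i j ∈ skewPrim K H (s i) (t j)) : IsComatrix K (blockX s t x) := by
  constructor
  · rintro (i | i) (j | j)
    · by_cases h : i = j <;> simp [blockX, h, (hs _).1]
    · simp [blockX, skew_counit (hs i) (ht j) (hx i j)]
    · simp [blockX]
    · by_cases h : i = j <;> simp [blockX, h, (ht _).1]
  · rintro (i | i) (j | j)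
    · by_cases h : i = j
      · subst h
        simp [blockX, (hs _).2, TensorProduct.ite_tmul]
      · simp [blockX, h, TensorProduct.ite_tmul]
    · simp [blockX, (mem_skewPrim K H).1 (hx i j), TensorProduct.ite_tmul,
        TensorProduct.tmul_ite]
    · simp [blockX]
    · by_cases h : i = j
      · subst h
        simp [blockX, (ht _).2, TensorProduct.ite_tmul]
      · simp [blockX, h, TensorProduct.ite_tmul]

lemma family {a b : ℕ} (ha : 0 < a) [Infinite K] (s : Fin a → H) (t : Fin b → H)
    (x : K → Fin a → Fin b → H)
    (hs : ∀ i, IsGrouplike K H (s i)) (ht : ∀ i, IsGrouplike K H (t i))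
    (hx : ∀ c i j, x c i j ∈ skewPrim K H (s i) (t j))
    (key : ∀ (c c' : K) (A : Matrix (Fin a) (Fin a) K) (B : Matrix (Fin a) (Fin b) K)
      (C : Matrix (Fin b) (Fin a) K) (D : Matrix (Fin b) (Fin b) K),
      (∀ k i, C k i • t k = C k i • s i) →
      (∀ i' i, A i' i • s i' + ∑ k, C k i • x c' i' k = A i' i • s i) →
      (C = 0 → (∀ i j, D i j • t i = D i j • t j) →
        (∀ i j, B i j • s i + ∑ k, D k j • x c' i k = ∑ k, A i k • x c k j + B i j • t j) →
        (∀ i j, A i j • s i = A i j • s j) →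
        ∃ p : K, A = p • 1 ∧ D = p • 1 ∧ (c ≠ c' → p = 0)) ∧ C = 0) :
    ¬ DiscreteCorepType K H := by
  intro hd
  let X : K → Fin a ⊕ Fin b → Fin a ⊕ Fin b → H := fun c => blockX s t (x c)
  have hX : ∀ c, IsComatrix K (X c) := fun c => blockX_comatrix s t _ hs ht (hx c)
  have hom : ∀ (c c' : K) (f : ComodHom K H (comodOf (X c) (hX c)) (comodOf (X c') (hX c'))),
      ∃ (p : K) (B : Matrix (Fin a) (Fin b) K),
        f.toLin = Matrix.toLin' (Matrix.fromBlocks (p • 1) B 0 (p • 1)) ∧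
        (c ≠ c' → p = 0) := by
    intro c c' f
    let P : Matrix (Fin a ⊕ Fin b) (Fin a ⊕ Fin b) K := LinearMap.toMatrix' f.toLin
    have hP : f.toLin = Matrix.toLin' P := (Matrix.toLin'_toMatrix' _).symm
    have he := hom_eq _ _ _ _ f P hP
    have key' := key c c' P.toBlocks₁₁ P.toBlocks₁₂ P.toBlocks₂₁ P.toBlocks₂₂ (by
        intro k i
        simpa [X, blockX, Matrix.toBlocks₁₁, Matrix.toBlocks₂₁] using he (.inr k) (.inl i)) (by
        intro k i
        simpa [X, blockX, Matrix.toBlocks₁₁, Matrix.toBlocks₂₁] using he (.inl k) (.inl i))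
    obtain ⟨k1, hC⟩ := key'
    have hC' : ∀ i j, P (.inr i) (.inl j) = 0 := fun i j => congrFun (congrFun hC i) j
    obtain ⟨p, hA, hD, hp⟩ := k1 hC (by
        intro i j
        simpa [X, blockX, Matrix.toBlocks₁₁, Matrix.toBlocks₁₂, Matrix.toBlocks₂₂, hC'] using he (.inr i) (.inr j)) (by
        intro i j
        simpa [X, blockX, Matrix.toBlocks₁₁, Matrix.toBlocks₁₂, Matrix.toBlocks₂₂] using he (.inl i) (.inr j)) (by
        intro i j
        simpa [X, blockX, Matrix.toBlocks₁₁, Matrix.toBlocks₁₂, Matrix.toBlocks₂₂, hC'] using he (.inl i) (.inl j))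
    refine ⟨p, P.toBlocks₁₂, ?_, hp⟩
    rw [hP]
    have : P = Matrix.fromBlocks (p • 1) P.toBlocks₁₂ 0 (p • 1) := by
      conv_lhs => rw [← Matrix.fromBlocks_toBlocks P, hA, hD, hC]
    exact congrArg Matrix.toLin' this
  have indec : ∀ c, (comodOf (X c) (hX c)).Indec K H := by
    intro c
    refine ⟨⟨(fun _ => 1 : Fin a ⊕ Fin b → K), fun h => ?_⟩, fun f hf => ?_⟩
    · exact one_ne_zero (congrFun h (.inl ⟨0, ha⟩) : (1 : K) = 0)
    · obtain ⟨p, B, h, -⟩ := hom c c f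
      rw [h] at hf ⊢
      have hf' : Matrix.fromBlocks (p • 1) B 0 (p • 1) * Matrix.fromBlocks (p • 1) B 0 (p • 1)
          = (Matrix.fromBlocks (p • 1) B 0 (p • 1) : Matrix (Fin a ⊕ Fin b) (Fin a ⊕ Fin b) K) := by
        apply Matrix.toLin'.injective
        rw [Matrix.toLin'_mul]
        exact hf
      rw [Matrix.fromBlocks_multiply, Matrix.fromBlocks_inj] at hf'
      obtain ⟨h1, h2, -, -⟩ := hf'
      have h3 := congrFun (congrFun h1 ⟨0, ha⟩) ⟨0, ha⟩
      simp at h3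
      have h3 : p = 1 ∨ p = 0 := by
        by_cases hp0 : p = 0
        · exact Or.inr hp0
        · left
          apply mul_left_cancel₀ hp0
          rw [mul_one]
          simp_all
      rcases h3 with h3 | h3
      · right
        subst h3
        have : B = 0 := by simpa using h2
        subst this
        simp only [one_smul, Matrix.fromBlocks_one, Matrix.toLin'_one]
        rfl
      · left
        subst h3
        have : B = 0 := by simpa using h2.symm
        subst this
        simp only [zero_smul, Matrix.fromBlocks_zero, map_zero]
        rfl
  let γ : Fin a ⊕ Fin b → H := Sum.elim s t
  obtain ⟨N, R, hR⟩ := hd (fun h => Nat.card {i : Fin (a + b) // γ (finSumFinEquiv.symm i) = h})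
  have hR' : ∀ c, ∃ i, ComodIso K H (comodOf (X c) (hX c)) (R i) := by
    intro c
    refine hR _ (indec c) (hasDim _ _ _ finSumFinEquiv.symm γ ?_ ?_ ?_)
    · rintro (i | i) <;> simp [X, blockX, γ]
    · rintro (i | i)
      · exact hs i
      · exact ht i
    · intro k l hlk
      obtain ⟨k, rfl⟩ := finSumFinEquiv.surjective k
      obtain ⟨l, rfl⟩ := finSumFinEquiv.surjective l
      rw [Equiv.symm_apply_apply, Equiv.symm_apply_apply]
      rcases k with k | k <;> rcases l with l | l
      · have : k ≠ l := by rintro rfl; exact lt_irrefl _ hlk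
        simp [X, blockX, this]
      · exfalso
        simp [Fin.lt_def] at hlk
        omega
      · rfl
      · have : k ≠ l := by rintro rfl; exact lt_irrefl _ hlk
        simp [X, blockX, this]
  choose q hq using hR'
  obtain ⟨c, c', hne, hcc⟩ := Finite.exists_ne_map_eq_of_infinite q
  have hi := hq c
  rw [hcc] at hi
  obtain ⟨f, hf⟩ := iso_hom hi (hq c')
  obtain ⟨p, B, h, hp⟩ := hom c c' f
  rw [hp hne] at h
  have hz : f.toLin (Pi.single (.inl ⟨0, ha⟩) 1 : Fin a ⊕ Fin b → K) = 0 := by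
    rw [h]
    change Matrix.toLin' _ (Pi.single _ _) = (0 : Fin a ⊕ Fin b → K)
    rw [Matrix.toLin'_apply, Matrix.mulVec_single_one]
    ext (i | i) <;> simp [Matrix.col_apply]
  have := hf.1 (hz.trans (map_zero _).symm)
  have h5 := congrFun this (.inl ⟨0, ha⟩)
  have h6 : (Pi.single (.inl ⟨0, ha⟩) 1 : Fin a ⊕ Fin b → K) (.inl ⟨0, ha⟩) = 0 := h5
  simp at h6

end Aux

section Aux2

variable {K : Type} [Field K] {H : Type} [AddCommGroup H] [Module K H] [Coalgebra K H]

lemma nt_cancel {g h y : H} (hy : y ∉ Submodule.span K {g - h}) {α c : K}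
    (e : c • y = α • (g - h)) : c = 0 := by
  by_contra hc
  apply hy
  rw [Submodule.mem_span_singleton]
  refine ⟨c⁻¹ * α, ?_⟩
  rw [mul_smul, ← e, smul_smul, inv_mul_cancel₀ hc, one_smul]

lemma kronecker [Infinite K] {g h y z : H} (hg : IsGrouplike K H g) (hh : IsGrouplike K H h)
    (hy : y ∈ skewPrim K H g h) (hz : z ∈ skewPrim K H g h)
    (hyz : ∀ a b : K, a • y + b • z ∈ Submodule.span K {g - h} → a = 0 ∧ b = 0) :
    ¬ DiscreteCorepType K H := by
  refine family (K := K) (a := 1) (b := 1) one_pos (fun _ => g) (fun _ => h)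
    (fun c _ _ => y + c • z) (fun _ => hg) (fun _ => hh)
    (fun c _ _ => Submodule.add_mem _ hy (Submodule.smul_mem _ _ hz)) ?_
  intro c c' A B C D h1 h2
  refine ⟨fun hC _ h3 _ => ?_, ?_⟩
  · have h4 := h3 0 0
    simp only [Fin.sum_univ_one] at h4
    have h5 := hyz (D 0 0 - A 0 0) (D 0 0 * c' - A 0 0 * c) (by
      rw [Submodule.mem_span_singleton]
      refine ⟨- B 0 0, ?_⟩
      linear_combination (norm := module) -h4)
    have h6 : D 0 0 = A 0 0 := sub_eq_zero.1 h5.1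
    refine ⟨A 0 0, ?_, ?_, ?_⟩
    · ext i j; fin_cases i; fin_cases j; simp
    · ext i j; fin_cases i; fin_cases j; simpa using h6
    · intro hne
      have h7 := h5.2
      rw [h6, ← mul_sub] at h7
      exact (mul_eq_zero.1 h7).resolve_right (sub_ne_zero.2 hne.symm)
  · have h4 := h2 0 0
    simp only [Fin.sum_univ_one, add_eq_left] at h4
    have h5 := hyz (C 0 0) (C 0 0 * c') (by
      rw [mul_smul, ← smul_add, h4]
      exact Submodule.zero_mem _)
    ext i j; fin_cases i; fin_cases j; exact h5.1

lemma dfive [Infinite K] {g1 g2 g3 h1 h2 h3 y11 y12 y13 y21 y31 : H}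
    (hg1 : IsGrouplike K H g1) (hg2 : IsGrouplike K H g2) (hg3 : IsGrouplike K H g3)
    (hh1 : IsGrouplike K H h1) (hh2 : IsGrouplike K H h2) (hh3 : IsGrouplike K H h3)
    (g12 : g1 ≠ g2) (g13 : g1 ≠ g3) (g23 : g2 ≠ g3)
    (h12 : h1 ≠ h2) (h13 : h1 ≠ h3) (h23 : h2 ≠ h3)
    (m11 : y11 ∈ skewPrim K H g1 h1) (m12 : y12 ∈ skewPrim K H g1 h2)
    (m13 : y13 ∈ skewPrim K H g1 h3) (m21 : y21 ∈ skewPrim K H g2 h1)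
    (m31 : y31 ∈ skewPrim K H g3 h1)
    (n11 : y11 ∉ Submodule.span K {g1 - h1}) (n12 : y12 ∉ Submodule.span K {g1 - h2})
    (n13 : y13 ∉ Submodule.span K {g1 - h3}) (n21 : y21 ∉ Submodule.span K {g2 - h1})
    (n31 : y31 ∉ Submodule.span K {g3 - h1}) :
    ¬ DiscreteCorepType K H := by
  refine family (K := K) (a := 4) (b := 4) (by norm_num) ![g1, g1, g2, g3] ![h1, h1, h2, h3]
    (fun c => ![![y11, 0, y12, y13], ![0, y11, y12, c • y13], ![y21, 0, 0, 0],
      ![0, y31, 0, 0]]) ?_ ?_ ?_ ?_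
  · intro i; fin_cases i <;> assumption
  · intro i; fin_cases i <;> assumption
  · intro c i j
    have m13' := Submodule.smul_mem _ c m13
    fin_cases i <;> fin_cases j <;> first | assumption | exact Submodule.zero_mem _
  intro c c' A B C D e1 e2
  have ze : ∀ {α : K} {u v : H}, u ≠ v → α • u = α • v → α = 0 := by
    intro α u v huv h
    by_contra hα
    exact huv (smul_right_injective H hα h)
  refine ⟨fun hC e3 e4 e5 => ?_, ?_⟩
  · have A02 : A 0 2 = 0 := ze g12 (e5 0 2)
    have A03 : A 0 3 = 0 := ze g13 (e5 0 3)
    have A12 : A 1 2 = 0 := ze g12 (e5 1 2)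
    have A13 : A 1 3 = 0 := ze g13 (e5 1 3)
    have A20 : A 2 0 = 0 := ze g12.symm (e5 2 0)
    have A21 : A 2 1 = 0 := ze g12.symm (e5 2 1)
    have A30 : A 3 0 = 0 := ze g13.symm (e5 3 0)
    have A31 : A 3 1 = 0 := ze g13.symm (e5 3 1)
    have A23 : A 2 3 = 0 := ze g23 (e5 2 3)
    have A32 : A 3 2 = 0 := ze g23.symm (e5 3 2)
    have D02 : D 0 2 = 0 := ze h12 (e3 0 2)
    have D03 : D 0 3 = 0 := ze h13 (e3 0 3)
    have D12 : D 1 2 = 0 := ze h12 (e3 1 2)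
    have D13 : D 1 3 = 0 := ze h13 (e3 1 3)
    have D20 : D 2 0 = 0 := ze h12.symm (e3 2 0)
    have D21 : D 2 1 = 0 := ze h12.symm (e3 2 1)
    have D30 : D 3 0 = 0 := ze h13.symm (e3 3 0)
    have D31 : D 3 1 = 0 := ze h13.symm (e3 3 1)
    have D23 : D 2 3 = 0 := ze h23 (e3 2 3)
    have D32 : D 3 2 = 0 := ze h23.symm (e3 3 2)
    have q00 := e4 0 0
    have q01 := e4 0 1
    have q10 := e4 1 0
    have q11 := e4 1 1
    have q20 := e4 2 0
    have q21 := e4 2 1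
    have q30 := e4 3 0
    have q31 := e4 3 1
    have q02 := e4 0 2
    have q12 := e4 1 2
    have q03 := e4 0 3
    have q13 := e4 1 3
    simp [Fin.sum_univ_four, A02, A03, D20, D30] at q00
    simp [Fin.sum_univ_four, A02, A03, D21, D31] at q01
    simp [Fin.sum_univ_four, A12, A13, D20, D30] at q10
    simp [Fin.sum_univ_four, A12, A13, D21, D31] at q11
    simp [Fin.sum_univ_four, A20, A21, A23, D20, D30] at q20
    simp [Fin.sum_univ_four, A20, A21, A23, D21, D31] at q21
    simp [Fin.sum_univ_four, A30, A31, A32, D20, D30] at q30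
    simp [Fin.sum_univ_four, A30, A31, A32, D21, D31] at q31
    simp [Fin.sum_univ_four, A02, A03, D02, D12, D32] at q02
    simp [Fin.sum_univ_four, A12, A13, D02, D12, D32] at q12
    simp [Fin.sum_univ_four, A02, A03, D03, D13, D23] at q03
    simp [Fin.sum_univ_four, A12, A13, D03, D13, D23] at q13
    have r00 : D 0 0 - A 0 0 = 0 := nt_cancel n11 (α := - B 0 0) (by
      linear_combination (norm := module) q00)
    have r01 : D 0 1 - A 0 1 = 0 := nt_cancel n11 (α := - B 0 1) (by
      linear_combination (norm := module) q01)
    have r10 : D 1 0 - A 1 0 = 0 := nt_cancel n11 (α := - B 1 0) (by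
      linear_combination (norm := module) q10)
    have r11 : D 1 1 - A 1 1 = 0 := nt_cancel n11 (α := - B 1 1) (by
      linear_combination (norm := module) q11)
    have r20 : D 0 0 - A 2 2 = 0 := nt_cancel n21 (α := - B 2 0) (by
      linear_combination (norm := module) q20)
    have r21 : D 0 1 = 0 := nt_cancel n21 (α := - B 2 1) (by
      linear_combination (norm := module) q21)
    have r30 : D 1 0 = 0 := nt_cancel n31 (α := - B 3 0) (by
      linear_combination (norm := module) q30)
    have r31 : D 1 1 - A 3 3 = 0 := nt_cancel n31 (α := - B 3 1) (by
      linear_combination (norm := module) q31)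
    have r02 : D 2 2 - A 0 0 - A 0 1 = 0 := nt_cancel n12 (α := - B 0 2) (by
      linear_combination (norm := module) q02)
    have r12 : D 2 2 - A 1 0 - A 1 1 = 0 := nt_cancel n12 (α := - B 1 2) (by
      linear_combination (norm := module) q12)
    have r03 : D 3 3 - A 0 0 - c * A 0 1 = 0 := nt_cancel n13 (α := - B 0 3) (by
      linear_combination (norm := module) q03)
    have r13 : c' * D 3 3 - A 1 0 - c * A 1 1 = 0 := nt_cancel n13 (α := - B 1 3) (by
      linear_combination (norm := module) q13)
    have a01 : A 0 1 = 0 := by linear_combination r21 - r01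
    have a10 : A 1 0 = 0 := by linear_combination r30 - r10
    have d22 : D 2 2 = A 0 0 := by linear_combination r02 + a01
    have a11 : A 1 1 = A 0 0 := by linear_combination d22 - r12 - a10
    have d33 : D 3 3 = A 0 0 := by linear_combination r03 + c * a01
    have d00 : D 0 0 = A 0 0 := by linear_combination r00
    have d11 : D 1 1 = A 0 0 := by linear_combination r11 + a11
    have a22 : A 2 2 = A 0 0 := by linear_combination r00 - r20
    have a33 : A 3 3 = A 0 0 := by linear_combination d11 - r31
    refine ⟨A 0 0, ?_, ?_, ?_⟩
    · ext i j; fin_cases i <;> fin_cases j <;> simp [*]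
    · ext i j; fin_cases i <;> fin_cases j <;> simp [*]
    · intro hne
      have : (c' - c) * A 0 0 = 0 := by
        linear_combination r13 - c' * d33 + c * a11 + a10
      exact (mul_eq_zero.1 this).resolve_left (sub_ne_zero.2 hne.symm)
  · have main : ∀ i, C 0 i = 0 ∧ C 1 i = 0 ∧ C 2 i = 0 ∧ C 3 i = 0 := by
      intro i
      have f0 := e1 0 i
      have f1 := e1 1 i
      have f2 := e1 2 i
      have f3 := e1 3 i
      have k0 := e2 0 i
      have k1 := e2 1 i
      generalize (![g1, g1, g2, g3] : Fin 4 → H) i = s at *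
      simp [Fin.sum_univ_four] at f0 f1 f2 f3 k0 k1
      by_cases s1 : h1 = s
      · subst s1
        have c2 : C 2 i = 0 := ze h12.symm f2
        have c3 : C 3 i = 0 := ze h13.symm f3
        simp [c2, c3] at k0 k1
        refine ⟨nt_cancel n11 (α := - A 0 i) ?_, nt_cancel n11 (α := - A 1 i) ?_, c2, c3⟩
        · linear_combination (norm := module) k0
        · linear_combination (norm := module) k1
      have c0 : C 0 i = 0 := ze s1 f0
      have c1 : C 1 i = 0 := ze s1 f1
      refine ⟨c0, c1, ?_⟩
      by_cases s2 : h2 = s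
      · subst s2
        have c3 : C 3 i = 0 := ze h23.symm f3
        simp [c0, c3] at k0
        refine ⟨nt_cancel n12 (α := - A 0 i) ?_, c3⟩
        linear_combination (norm := module) k0
      have c2 : C 2 i = 0 := ze s2 f2
      refine ⟨c2, ?_⟩
      by_cases s3 : h3 = s
      · subst s3
        simp [c0, c2] at k0
        refine nt_cancel n13 (α := - A 0 i) ?_
        linear_combination (norm := module) k0
      · exact ze s3 f3
    ext k i
    obtain ⟨u0, u1, u2, u3⟩ := main i
    fin_cases k <;> assumption

end Aux2

section Aux3

variable {K : Type} [Field K] {H : Type} [Ring H] [HopfAlgebra K H]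

lemma gl_one : IsGrouplike K H (1 : H) := by
  constructor
  · simp
  · simp [Algebra.TensorProduct.one_def]

lemma gl_mul {g h : H} (hg : IsGrouplike K H g) (hh : IsGrouplike K H h) :
    IsGrouplike K H (g * h) := by
  constructor
  · simp [hg.1, hh.1]
  · simp [hg.2, hh.2]

lemma gl_inv {g : H} (hg : IsGrouplike K H g) :
    ∃ g', IsGrouplike K H g' ∧ g * g' = 1 ∧ g' * g = 1 := by
  have hg' : IsGroupLikeElem K g := ⟨hg.1, hg.2⟩
  have h2 := hg'.antipode
  exact ⟨HopfAlgebra.antipode K g, ⟨h2.1, h2.2⟩, hg'.mul_antipode_cancel,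
    hg'.antipode_mul_cancel⟩

lemma skew_mul {u g h y : H} (hu : IsGrouplike K H u) (hy : y ∈ skewPrim K H g h) :
    u * y ∈ skewPrim K H (u * g) (u * h) := by
  rw [mem_skewPrim] at *
  simp [hy, hu.2, mul_add]

lemma nt_mul {u g h y : H} (hu : IsGrouplike K H u) (hy : y ∉ Submodule.span K {g - h}) :
    u * y ∉ Submodule.span K {u * g - u * h} := by
  obtain ⟨u', -, -, h1⟩ := gl_inv hu
  intro h
  apply hy
  rw [Submodule.mem_span_singleton] at *
  obtain ⟨a, ha⟩ := h
  refine ⟨a, ?_⟩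
  have := congrArg (fun z => u' * z) ha
  simpa [← mul_sub, ← mul_assoc, h1] using this

def NT (K : Type) [Field K] {H : Type} [Ring H] [HopfAlgebra K H] (g h : H) : Prop :=
  ∃ y ∈ skewPrim K H g h, y ∉ Submodule.span K {g - h}

lemma NT_mul {u g h : H} (hu : IsGrouplike K H u) (hy : NT K g h) : NT K (u * g) (u * h) := by
  obtain ⟨y, h1, h2⟩ := hy
  exact ⟨u * y, skew_mul hu h1, nt_mul hu h2⟩

lemma dfive' [Infinite K] {g1 g2 g3 h1 h2 h3 : H}
    (hg1 : IsGrouplike K H g1) (hg2 : IsGrouplike K H g2) (hg3 : IsGrouplike K H g3)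
    (hh1 : IsGrouplike K H h1) (hh2 : IsGrouplike K H h2) (hh3 : IsGrouplike K H h3)
    (g12 : g1 ≠ g2) (g13 : g1 ≠ g3) (g23 : g2 ≠ g3)
    (h12 : h1 ≠ h2) (h13 : h1 ≠ h3) (h23 : h2 ≠ h3)
    (n11 : NT K g1 h1) (n12 : NT K g1 h2) (n13 : NT K g1 h3) (n21 : NT K g2 h1)
    (n31 : NT K g3 h1) : ¬ DiscreteCorepType K H := by
  obtain ⟨y11, m11, n11⟩ := n11
  obtain ⟨y12, m12, n12⟩ := n12
  obtain ⟨y13, m13, n13⟩ := n13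
  obtain ⟨y21, m21, n21⟩ := n21
  obtain ⟨y31, m31, n31⟩ := n31
  exact dfive hg1 hg2 hg3 hh1 hh2 hh3 g12 g13 g23 h12 h13 h23 m11 m12 m13 m21 m31
    n11 n12 n13 n21 n31

lemma three_out [Infinite K] {g h1 h2 h3 : H} (hg : IsGrouplike K H g)
    (hh1 : IsGrouplike K H h1) (hh2 : IsGrouplike K H h2) (hh3 : IsGrouplike K H h3)
    (h12 : h1 ≠ h2) (h13 : h1 ≠ h3) (h23 : h2 ≠ h3)
    (n1 : NT K g h1) (n2 : NT K g h2) (n3 : NT K g h3) : ¬ DiscreteCorepType K H := by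
  obtain ⟨g', -, gg', g'g⟩ := gl_inv hg
  obtain ⟨k1, kl1, hk1, kh1⟩ := gl_inv hh1
  obtain ⟨k2, kl2, hk2, kh2⟩ := gl_inv hh2
  obtain ⟨k3, kl3, hk3, kh3⟩ := gl_inv hh3
  have t : ∀ {x y k k' : H}, k * x = 1 → y * k' = 1 → k = k' → y = x := by
    intro x y k k' a b c
    subst c
    calc y = y * (k * x) := by rw [a, mul_one]
      _ = x := by rw [← mul_assoc, b, one_mul]
  have canc : ∀ {x y : H}, h1 * x * g = h1 * y * g → x = y := by
    intro x y e
    have := congrArg (fun z => k1 * z * g') e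
    simpa only [← mul_assoc, kh1, one_mul, mul_assoc _ g g', gg', mul_one] using this
  refine dfive' (g2 := h1 * k2 * g) (g3 := h1 * k3 * g) hg (gl_mul (gl_mul hh1 kl2) hg)
    (gl_mul (gl_mul hh1 kl3) hg) hh1 hh2 hh3 ?_ ?_ ?_ h12 h13 h23 n1 n2 n3 ?_ ?_
  · intro e
    have : h1 * k1 * g = h1 * k2 * g := by rw [hk1, one_mul]; exact e
    exact h12 (t kh2 hk1 (canc this).symm)
  · intro e
    have : h1 * k1 * g = h1 * k3 * g := by rw [hk1, one_mul]; exact e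
    exact h13 (t kh3 hk1 (canc this).symm)
  · intro e
    exact h23 (t kh3 hk2 (canc e).symm)
  · have := NT_mul (gl_mul hh1 kl2) n2
    rwa [mul_assoc h1 k2 h2, kh2, mul_one] at this
  · have := NT_mul (gl_mul hh1 kl3) n3
    rwa [mul_assoc h1 k3 h3, kh3, mul_one] at this

lemma three_in [Infinite K] {h g1 g2 g3 : H} (hh : IsGrouplike K H h)
    (hg1 : IsGrouplike K H g1) (hg2 : IsGrouplike K H g2) (hg3 : IsGrouplike K H g3)
    (g12 : g1 ≠ g2) (g13 : g1 ≠ g3) (g23 : g2 ≠ g3)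
    (n1 : NT K g1 h) (n2 : NT K g2 h) (n3 : NT K g3 h) : ¬ DiscreteCorepType K H := by
  obtain ⟨h', -, hh', h'h⟩ := gl_inv hh
  obtain ⟨k1, kl1, hk1, kh1⟩ := gl_inv hg1
  obtain ⟨k2, kl2, hk2, kh2⟩ := gl_inv hg2
  obtain ⟨k3, kl3, hk3, kh3⟩ := gl_inv hg3
  have t : ∀ {x y k k' : H}, k * x = 1 → y * k' = 1 → k = k' → y = x := by
    intro x y k k' a b c
    subst c
    calc y = y * (k * x) := by rw [a, mul_one]
      _ = x := by rw [← mul_assoc, b, one_mul]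
  have canc : ∀ {x y : H}, g1 * x * h = g1 * y * h → x = y := by
    intro x y e
    have := congrArg (fun z => k1 * z * h') e
    simpa only [← mul_assoc, kh1, one_mul, mul_assoc _ h h', hh', mul_one] using this
  refine dfive' (h2 := g1 * k2 * h) (h3 := g1 * k3 * h) hg1 hg2 hg3 hh
    (gl_mul (gl_mul hg1 kl2) hh) (gl_mul (gl_mul hg1 kl3) hh) g12 g13 g23 ?_ ?_ ?_ n1 ?_ ?_ n2 n3
  · intro e
    have : g1 * k1 * h = g1 * k2 * h := by rw [hk1, one_mul]; exact e
    exact g12 (t kh2 hk1 (canc this).symm)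
  · intro e
    have : g1 * k1 * h = g1 * k3 * h := by rw [hk1, one_mul]; exact e
    exact g13 (t kh3 hk1 (canc this).symm)
  · intro e
    exact g23 (t kh3 hk2 (canc e).symm)
  · have := NT_mul (gl_mul hg1 kl2) n2
    rwa [mul_assoc g1 k2 g2, kh2, mul_one] at this
  · have := NT_mul (gl_mul hg1 kl3) n3
    rwa [mul_assoc g1 k3 g3, kh3, mul_one] at this

lemma nt_of_rank {g h : H} (hr : ntRank K H g h ≠ 0) : NT K g h := by
  by_contra hn
  apply hr
  unfold ntRank
  rw [rank_zero_iff]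
  rw [Submodule.Quotient.subsingleton_iff, eq_top_iff]
  intro x _
  by_contra hx
  exact hn ⟨x.1, x.2, hx⟩

lemma ntRank_le_one_aux [Infinite K] (hd : DiscreteCorepType K H) {g h : H}
    (hg : IsGrouplike K H g) (hh : IsGrouplike K H h) : ntRank K H g h ≤ 1 := by
  by_contra hlt
  have h2 : ((2 : ℕ) : Cardinal) ≤ ntRank K H g h := by
    have := Order.succ_le_of_lt (not_le.1 hlt)
    have e : (Order.succ 1 : Cardinal) = 2 := by
      have := Cardinal.succ_natCast 1
      norm_num at this
      exact this
    rw [e] at this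
    exact_mod_cast this
  unfold ntRank at h2
  rw [Module.le_rank_iff] at h2
  obtain ⟨v, hv⟩ := h2
  obtain ⟨y, hy⟩ := Submodule.mkQ_surjective _ (v 0)
  obtain ⟨z, hz⟩ := Submodule.mkQ_surjective _ (v 1)
  refine kronecker hg hh y.2 z.2 ?_ hd
  intro a b hab
  have h3 : a • v 0 + b • v 1 = 0 := by
    rw [← hy, ← hz, ← map_smul, ← map_smul, ← map_add, Submodule.mkQ_apply,
      Submodule.Quotient.mk_eq_zero]
    simpa using hab
  have h4 := Fintype.linearIndependent_iff.1 hv ![a, b] (by simpa [Fin.sum_univ_two] using h3)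
  exact ⟨h4 0, h4 1⟩

lemma sum_le_two {T : Type} (f : T → Cardinal.{0}) (h1 : ∀ u, f u ≤ 1)
    (h3 : ∀ u v w, u ≠ v → u ≠ w → v ≠ w → f u ≠ 0 → f v ≠ 0 → f w ≠ 0 → False) :
    Cardinal.sum f ≤ 2 := by
  have h2 : Cardinal.sum f ≤ Cardinal.mk {u : T // f u ≠ 0} := by
    have : Cardinal.sum f ≤ Cardinal.sum (fun u => Cardinal.mk (PLift (f u ≠ 0))) := by
      refine Cardinal.sum_le_sum _ _ fun u => ?_
      by_cases hu : f u = 0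
      · rw [hu]; exact zero_le
      · refine (h1 u).trans ?_
        rw [Cardinal.one_le_iff_ne_zero, Cardinal.mk_ne_zero_iff]
        exact ⟨⟨hu⟩⟩
    refine this.trans ?_
    rw [← Cardinal.mk_sigma]
    refine Cardinal.mk_le_of_injective (f := fun p => ⟨p.1, p.2.down⟩) ?_
    rintro ⟨u, ⟨p⟩⟩ ⟨v, ⟨q⟩⟩ h
    simp at h
    subst h
    rfl
  refine h2.trans ?_
  by_contra hlt
  have h4 : Cardinal.mk (Fin 3) ≤ Cardinal.mk {u : T // f u ≠ 0} := by
    have := Order.succ_le_of_lt (not_le.1 hlt)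
    have e : (Order.succ 2 : Cardinal) = 3 := by
      have := Cardinal.succ_natCast 2
      norm_num at this
      exact this
    rw [e] at this
    simpa using this
  obtain ⟨φ⟩ := h4
  have inj : ∀ i j : Fin 3, i ≠ j → (φ i).1 ≠ (φ j).1 := fun i j hij e =>
    hij (φ.injective (Subtype.ext e))
  exact h3 _ _ _ (inj 0 1 (by decide)) (inj 0 2 (by decide)) (inj 1 2 (by decide))
    (φ 0).2 (φ 1).2 (φ 2).2

end Aux3

theorem at_most_two_arrows
    (K : Type) [Field K] [IsAlgClosed K]
    (H : Type) [Ring H] [HopfAlgebra K H]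
    (hpointed : IsPointedCoalgebra K H) (hdiscrete : DiscreteCorepType K H) :
    (∀ g : H, IsGrouplike K H g →
      Cardinal.sum (fun u : {u : H // IsGrouplike K H u} => ntRank K H g u.1) ≤ 2 ∧
      Cardinal.sum (fun u : {u : H // IsGrouplike K H u} => ntRank K H u.1 g) ≤ 2) ∧
    (∀ g h : H, IsGrouplike K H g → IsGrouplike K H h → g ≠ h → ntRank K H g h ≤ 1) := by
  have : Infinite K := inferInstance
  refine ⟨fun g hg => ⟨sum_le_two _ (fun u => ntRank_le_one_aux hdiscrete hg u.2) ?_,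
    sum_le_two _ (fun u => ntRank_le_one_aux hdiscrete u.2 hg) ?_⟩,
    fun g h hg hh _ => ntRank_le_one_aux hdiscrete hg hh⟩
  · intro u v w uv uw vw nu nv nw
    exact three_out hg u.2 v.2 w.2 (fun e => uv (Subtype.ext e)) (fun e => uw (Subtype.ext e))
      (fun e => vw (Subtype.ext e)) (nt_of_rank nu) (nt_of_rank nv) (nt_of_rank nw) hdiscrete
  · intro u v w uv uw vw nu nv nw
    exact three_in hg u.2 v.2 w.2 (fun e => uv (Subtype.ext e)) (fun e => uw (Subtype.ext e))
      (fun e => vw (Subtype.ext e)) (nt_of_rank nu) (nt_of_rank nv) (nt_of_rank nw) hdiscrete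
end
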